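/- arXiv:2402.09185 — 4 statements merged into one kernel-verified Lean document; each statement's English description precedes it below -/
import Mathlib

section
/- Let V be a PVAS of dimension d with edge set E whose reachability relation →_V* ⊆ ℕ^d × ℕ^d is semilinear. Then →_V* is flattable with respect to V: there exist finitely many words w₁,…,w_r ∈ E* such that →_V* = →_{w₁}* ∘ … ∘ →_{w_r}*. -/
/-- Vectors of naturals of dimension `d`. -/
abbrev NVec (d : ℕ) := Fin d → ℕ

/-- A priority vector addition system (PVAS) of dimension `d`: a finite set of edges,
each edge having an update vector in `ℤ^d` and a test level `g(e) ∈ {0,…,d}`. -/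
structure PVAS (d : ℕ) where
  E : Type
  fintypeE : Fintype E
  upd : E → Fin d → ℤ
  test : E → ℕ
  test_le : ∀ e, test e ≤ d

namespace PVAS

variable {d : ℕ} (V : PVAS d)

/-- The step relation induced by an edge `e`: `x →_e x'` iff the first `test e`
counters of `x` are `0` and `x' = x + upd e` (which must stay in `ℕ^d`). -/
def StepE (e : V.E) (x x' : NVec d) : Prop :=
  (∀ j : Fin d, (j : ℕ) < V.test e → x j = 0) ∧
    ∀ i : Fin d, (x' i : ℤ) = (x i : ℤ) + V.upd e i

/-- The one-step relation: union of the `→_e`. -/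
def Step (x x' : NVec d) : Prop := ∃ e : V.E, V.StepE e x x'

/-- The reachability relation `→_V*`. -/
def Reach : NVec d → NVec d → Prop := Relation.ReflTransGen V.Step

/-- For a word `w = e₁ … e_k` of edges, `→_w := →_{e₁} ∘ … ∘ →_{e_k}`. -/
def StepWord : List V.E → NVec d → NVec d → Prop
  | [] => Eq
  | e :: w => fun x z => ∃ y, V.StepE e x y ∧ StepWord w y z

end PVAS

/-- Composition of a finite list of relations. -/
def compList {α : Type*} : List (α → α → Prop) → α → α → Prop
  | [] => Eq
  | R :: Rs => fun x z => ∃ y, R x y ∧ compList Rs y z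

/-- A set in a commutative monoid is linear if it is of the form
`b + ℕ·p₁ + … + ℕ·p_r`. -/
def IsLinSet {M : Type*} [AddCommMonoid M] (L : Set M) : Prop :=
  ∃ (b : M) (r : ℕ) (p : Fin r → M),
    L = {x | ∃ c : Fin r → ℕ, x = b + ∑ i, c i • p i}

/-- A set is semilinear if it is a finite union of linear sets. -/
def IsSemilinSet {M : Type*} [AddCommMonoid M] (S : Set M) : Prop :=
  ∃ (n : ℕ) (L : Fin n → Set M), (∀ i, IsLinSet (L i)) ∧ S = ⋃ i, L i

open Filter Topology

/-- cast of integer vectors to real vectors -/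
def ri (p : ℕ) : (Fin p → ℤ) →ₗ[ℤ] (Fin p → ℝ) where
  toFun y := fun j => (y j : ℝ)
  map_add' x y := by ext j; simp
  map_smul' e y := by ext j; simp

theorem ri_apply {p : ℕ} (y : Fin p → ℤ) (j : Fin p) : ri p y j = (y j : ℝ) := rfl

theorem ri_inj {p : ℕ} {x y : Fin p → ℤ} (h : ri p x = ri p y) : x = y := by
  ext j
  have := congrFun h j
  simpa [ri_apply] using this

theorem ri_finite {p : ℕ} (R : ℝ) : {y : Fin p → ℤ | ‖ri p y‖ ≤ R}.Finite := by
  apply (Set.finite_Icc (fun _ : Fin p => -⌈R⌉) (fun _ => ⌈R⌉)).subset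
  intro y hy
  have h : ∀ j, |(y j : ℝ)| ≤ R := fun j => by
    have := (norm_le_pi_norm (ri p y) j).trans hy
    simpa [ri_apply] using this
  constructor
  · intro j
    have := neg_le_of_abs_le (h j)
    have h2 := Int.le_ceil R
    have : (-(⌈R⌉ : ℤ) : ℝ) ≤ y j := by linarith
    exact_mod_cast this
  · intro j
    have := le_of_abs_le (h j)
    have h2 := Int.le_ceil R
    have : (y j : ℝ) ≤ ((⌈R⌉ : ℤ) : ℝ) := by linarith
    exact_mod_cast this

theorem dirichlet {p : ℕ} (θ : Fin p → ℝ) {ε : ℝ} (hε : 0 < ε) (T : ℝ) :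
    ∃ (y : Fin p → ℤ) (t : ℝ), T ≤ t ∧ ‖ri p y - t • θ‖ < ε := by
  set T' := max T 1
  have hT' : 1 ≤ T' := le_max_right _ _
  let u : ℕ → (Fin p → ℝ) := fun k j => Int.fract ((k : ℝ) * T' * θ j)
  have hu : ∀ k, u k ∈ Set.Icc (0 : Fin p → ℝ) 1 := fun k =>
    ⟨fun j => Int.fract_nonneg _, fun j => (Int.fract_lt_one _).le⟩
  obtain ⟨a, -, φ, hφ, ha⟩ := (isCompact_Icc (a := (0 : Fin p → ℝ)) (b := 1)).tendsto_subseq hu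
  obtain ⟨N, hN⟩ := Metric.cauchySeq_iff'.1 ha.cauchySeq ε hε
  have h1 := hN (N + 1) (by omega)
  have hlt : φ N < φ (N + 1) := hφ (by omega)
  refine ⟨fun j => ⌊(φ (N + 1) : ℝ) * T' * θ j⌋ - ⌊(φ N : ℝ) * T' * θ j⌋,
    ((φ (N + 1) : ℝ) - φ N) * T', ?_, ?_⟩
  · have : (1 : ℝ) ≤ (φ (N + 1) : ℝ) - φ N := by
      have : (φ N : ℝ) + 1 ≤ φ (N + 1) := by exact_mod_cast hlt
      linarith
    have h3 : T ≤ T' := le_max_left _ _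
    nlinarith
  · rw [dist_eq_norm, ← norm_neg] at h1
    refine lt_of_eq_of_lt (congrArg norm ?_) h1
    ext j
    simp only [ri_apply, u, Pi.sub_apply, Pi.smul_apply, Pi.neg_apply, Function.comp, Int.fract, smul_eq_mul]
    push_cast
    ring

/-- integer points near the line -/
def Yset {p : ℕ} (θ : Fin p → ℝ) (ε : ℝ) : Set (Fin p → ℤ) :=
  {y | ∃ t : ℝ, ‖ri p y - t • θ‖ < ε}

theorem exists_S {p : ℕ} (θ : Fin p → ℝ) : ∃ S : Submodule ℝ (Fin p → ℝ), ∃ ε0 : ℝ, 0 < ε0 ∧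
    ∀ ε, 0 < ε → ε ≤ ε0 → Submodule.span ℝ (ri p '' Yset θ ε) = S := by
  let f : {ε : ℝ // 0 < ε} → ℕ := fun ε => Module.finrank ℝ (Submodule.span ℝ (ri p '' Yset θ ε.1))
  have hne : (Set.range f).Nonempty := ⟨_, ⟨⟨1, one_pos⟩, rfl⟩⟩
  obtain ⟨ε0, h0⟩ := Nat.sInf_mem hne
  refine ⟨Submodule.span ℝ (ri p '' Yset θ ε0.1), ε0.1, ε0.2, fun ε hε hle => ?_⟩
  · apply Submodule.eq_of_le_of_finrank_le
    · apply Submodule.span_mono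
      apply Set.image_mono
      rintro y ⟨t, ht⟩
      exact ⟨t, ht.trans_le hle⟩
    · change f ε0 ≤ f ⟨ε, hε⟩
      rw [h0]
      exact Nat.sInf_le ⟨_, rfl⟩

theorem lin_bound {p : ℕ} (l : (Fin p → ℝ) →ₗ[ℝ] ℝ) : ∃ C : ℝ, 0 < C ∧ ∀ x, |l x| ≤ C * ‖x‖ := by
  obtain ⟨C, hC, h⟩ := (LinearMap.toContinuousLinearMap l).bound
  exact ⟨C, hC, h⟩

theorem lemY {p : ℕ} (θ : Fin p → ℝ) (S : Submodule ℝ (Fin p → ℝ)) (ε0 : ℝ) (h0 : 0 < ε0)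
    (hS : ∀ ε, 0 < ε → ε ≤ ε0 → Submodule.span ℝ (ri p '' Yset θ ε) = S)
    (l : (Fin p → ℝ) →ₗ[ℝ] ℝ) (hl : ∃ x ∈ S, l x ≠ 0) (hlθ : l θ ≤ 0)
    (ε : ℝ) (hε : 0 < ε) (T : ℝ) :
    ∃ (y : Fin p → ℤ) (t : ℝ), T ≤ t ∧ ‖ri p y - t • θ‖ < ε ∧ l (ri p y) < 0 := by
  obtain ⟨C, hC, hb⟩ := lin_bound l
  have key : ∀ (y : Fin p → ℤ) (t : ℝ), l (ri p y) = t * l θ + l (ri p y - t • θ) := by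
    intro y t; simp
  rcases hlθ.lt_or_eq with hneg | hz
  · obtain ⟨y, t, ht, hy⟩ := dirichlet θ hε (max T ((C * ε) / (- l θ)))
    refine ⟨y, t, (le_max_left _ _).trans ht, hy, ?_⟩
    have h1 := (le_max_right _ _).trans ht
    rw [div_le_iff₀ (by linarith)] at h1
    have h2 := le_of_abs_le (hb (ri p y - t • θ))
    rw [key y t]
    nlinarith
  · -- case l θ = 0
    set ε1 := min (ε / 2) ε0
    have hε1 : 0 < ε1 := lt_min (by linarith) h0
    have : ∃ y ∈ Yset θ ε1, l (ri p y) ≠ 0 := by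
      by_contra hcon
      push Not at hcon
      obtain ⟨x, hx, hlx⟩ := hl
      rw [← hS ε1 hε1 (min_le_right _ _)] at hx
      apply hlx
      have : Submodule.span ℝ (ri p '' Yset θ ε1) ≤ LinearMap.ker l := by
        rw [Submodule.span_le]
        rintro _ ⟨y, hy, rfl⟩
        exact hcon y hy
      exact this hx
    obtain ⟨y0, ⟨t0, ht0⟩, hy0⟩ := this
    have : ∃ (y0 : Fin p → ℤ) (t0 : ℝ), ‖ri p y0 - t0 • θ‖ < ε1 ∧ l (ri p y0) < 0 := by
      rcases lt_or_gt_of_ne hy0 with h | h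
      · exact ⟨y0, t0, ht0, h⟩
      · refine ⟨-y0, -t0, ?_, by simpa using h⟩
        have hh : ri p (-y0) - (-t0) • θ = -(ri p y0 - t0 • θ) := by
          rw [map_neg, neg_smul]; abel
        rw [hh, norm_neg]
        exact ht0
    obtain ⟨y0, t0, ht0, hy0⟩ := this
    have hpos : 0 < min (ε / 2) (-l (ri p y0) / C) := lt_min (by linarith) (div_pos (by linarith) hC)
    obtain ⟨y1, t1, ht1, hy1⟩ := dirichlet θ hpos (T - t0)
    refine ⟨y0 + y1, t0 + t1, by linarith, ?_, ?_⟩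
    · have : ri p (y0 + y1) - (t0 + t1) • θ = (ri p y0 - t0 • θ) + (ri p y1 - t1 • θ) := by
        rw [map_add, add_smul]; abel
      rw [this]
      have a1 := ht0.trans_le (min_le_left _ _)
      have a2 := hy1.trans_le (min_le_left _ _)
      linarith [norm_add_le (ri p y0 - t0 • θ) (ri p y1 - t1 • θ)]
    · rw [map_add, map_add, key y1 t1, hz]
      have a2 := hy1.trans_le (min_le_right _ _)
      rw [lt_div_iff₀ hC] at a2
      have h2 := le_of_abs_le (hb (ri p y1 - t1 • θ))
      linarith

theorem theta_mem_S {p : ℕ} (θ : Fin p → ℝ) (S : Submodule ℝ (Fin p → ℝ)) (ε0 : ℝ) (h0 : 0 < ε0)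
    (hS : ∀ ε, 0 < ε → ε ≤ ε0 → Submodule.span ℝ (ri p '' Yset θ ε) = S) : θ ∈ S := by
  by_contra hθ
  obtain ⟨l, hl, hl2⟩ := Submodule.exists_le_ker_of_notMem hθ
  obtain ⟨C, hC, hb⟩ := lin_bound l
  have hpos : 0 < |l θ| := abs_pos.2 hl
  obtain ⟨y, t, ht, hy⟩ := dirichlet θ h0 (C * ε0 / |l θ|)
  rw [div_le_iff₀ hpos] at ht
  have hyS : ri p y ∈ S := by
    rw [← hS ε0 h0 le_rfl]
    exact Submodule.subset_span ⟨y, ⟨t, hy⟩, rfl⟩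
  have h1 : l (ri p y) = 0 := hl2 hyS
  have h2 := hb (ri p y - t • θ)
  rw [map_sub, h1, map_smul, zero_sub, abs_neg, smul_eq_mul, abs_mul] at h2
  have h3 := le_abs_self t
  nlinarith


theorem realify {a b : ℕ} (L : (Fin a → ℤ) →ₗ[ℤ] (Fin b → ℤ)) :
    ∃ LR : (Fin a → ℝ) →ₗ[ℝ] (Fin b → ℝ), ∀ x, LR (ri a x) = ri b (L x) := by
  refine ⟨((LinearMap.toMatrix' L).map (Int.cast : ℤ → ℝ)).mulVecLin, fun x => ?_⟩
  ext i
  have h : L x = (LinearMap.toMatrix' L).mulVec x := by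
    rw [← Matrix.toLin'_apply, Matrix.toLin'_toMatrix']
  rw [h, ri_apply]
  simp [Matrix.mulVec, dotProduct, ri_apply]

theorem ri_ext {a : ℕ} {M : Type*} [AddCommGroup M] [Module ℝ M] (f g : (Fin a → ℝ) →ₗ[ℝ] M)
    (h : ∀ x, f (ri a x) = g (ri a x)) : f = g := by
  apply LinearMap.pi_ext'
  intro i
  apply LinearMap.ext_ring
  have := h (Pi.single i 1)
  have e : ri a (Pi.single i 1) = Pi.single i 1 := by
    ext j
    rw [ri_apply]
    by_cases hj : j = i
    · subst hj; simp
    · simp [hj]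
  rw [e] at this
  simpa using this

theorem exists_B {p : ℕ} (S : Submodule ℝ (Fin p → ℝ)) (Y : Set (Fin p → ℤ))
    (hS : Submodule.span ℝ (ri p '' Y) = S) (θ : Fin p → ℝ) (hθ : θ ∈ S) (h0 : θ ≠ 0) :
    ∃ (p' : ℕ) (B : (Fin p → ℤ) →ₗ[ℤ] (Fin p' → ℤ)) (BR : (Fin p → ℝ) →ₗ[ℝ] (Fin p' → ℝ))
      (σ : (Fin p' → ℝ) →ₗ[ℝ] (Fin p → ℝ)),
      p' < p ∧ Function.Surjective B ∧ (∀ x, B x = 0 ↔ ri p x ∈ S) ∧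
      (∀ x, BR (ri p x) = ri p' (B x)) ∧ (∀ x ∈ S, BR x = 0) ∧
      (∀ x, ri p x - σ (ri p' (B x)) ∈ S) := by
  let N : Submodule ℤ (Fin p → ℤ) := (S.restrictScalars ℤ).comap (ri p)
  have hN : ∀ x, x ∈ N ↔ ri p x ∈ S := fun x => Iff.rfl
  have htf : Module.IsTorsionFree ℤ ((Fin p → ℤ) ⧸ N) := by
    apply Module.IsTorsionFree.of_smul_eq_zero
    intro r m h
    by_cases hr : r = 0
    · exact Or.inl hr
    right
    obtain ⟨x, rfl⟩ := Submodule.mkQ_surjective N m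
    rw [← map_smul] at h
    simp only [Submodule.mkQ_apply, Submodule.Quotient.mk_eq_zero] at h ⊢
    rw [hN] at h ⊢
    have hr' : (r : ℝ) ≠ 0 := by exact_mod_cast hr
    have e : ri p (r • x) = (r : ℝ) • ri p x := by
      ext j; simp [ri_apply]
    rw [e] at h
    exact (Submodule.smul_mem_iff S hr').1 h
  have : Module.Free ℤ ((Fin p → ℤ) ⧸ N) := Module.free_of_finite_type_torsion_free'
  let b := Module.finBasis ℤ ((Fin p → ℤ) ⧸ N)
  set p' := Module.finrank ℤ ((Fin p → ℤ) ⧸ N)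
  let B : (Fin p → ℤ) →ₗ[ℤ] (Fin p' → ℤ) := b.equivFun.toLinearMap ∘ₗ N.mkQ
  have hB : Function.Surjective B := b.equivFun.surjective.comp (Submodule.mkQ_surjective N)
  have hB0 : ∀ x, B x = 0 ↔ ri p x ∈ S := by
    intro x
    rw [← hN]
    simp [B]
  obtain ⟨τ, hτ⟩ := Module.projective_lifting_property B LinearMap.id hB
  have hτ' : ∀ x, B (τ x) = x := fun x => LinearMap.congr_fun hτ x
  obtain ⟨BR, hBR⟩ := realify B
  obtain ⟨σ, hσ⟩ := realify τ
  have hBS : ∀ x ∈ S, BR x = 0 := by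
    intro x hx
    have : S ≤ LinearMap.ker BR := by
      rw [← hS, Submodule.span_le]
      rintro _ ⟨y, hy, rfl⟩
      have : B y = 0 := (hB0 y).2 (hS ▸ Submodule.subset_span ⟨y, hy, rfl⟩)
      simp [hBR, this]
    exact this hx
  have hBσ : BR ∘ₗ σ = LinearMap.id := by
    apply ri_ext
    intro x
    simp [hσ, hBR, hτ']
  refine ⟨p', B, BR, σ, ?_, hB, hB0, hBR, hBS, ?_⟩
  · have hsur : Function.Surjective BR := fun y => ⟨σ y, LinearMap.congr_fun hBσ y⟩
    have h1 := LinearMap.finrank_range_add_finrank_ker BR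
    rw [LinearMap.range_eq_top.2 hsur, finrank_top] at h1
    have h2 : 0 < Module.finrank ℝ (LinearMap.ker BR) := by
      apply Module.finrank_pos_iff_exists_ne_zero.2
      exact ⟨⟨θ, hBS θ hθ⟩, fun h => h0 (congrArg Subtype.val h)⟩
    simp at h1
    omega
  · intro x
    rw [hσ, ← map_sub, ← hB0, map_sub, hτ', sub_self]

theorem seq_ext {α : Type*} (Q : List α → Prop) (R : α → α → Prop) (h0 : Q [])
    (hs : ∀ l, Q l → ∃ i, Q (i :: l)) (hR : ∀ i l, Q (i :: l) → ∀ j ∈ l, R j i) :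
    ∃ f : ℕ → α, ∀ j k, j < k → R (f j) (f k) := by
  have : Nonempty α := ⟨(hs [] h0).choose⟩
  choose! c hc using hs
  let g : ℕ → List α := fun n => Nat.rec [] (fun _ l => c l :: l) n
  have hg : ∀ n, Q (g n) := by
    intro n
    induction n with
    | zero => exact h0
    | succ n ih => exact hc _ ih
  have hmem : ∀ k j, j < k → c (g j) ∈ g k := by
    intro k
    induction k with
    | zero => intro j hj; omega
    | succ k ih =>
      intro j hj
      change _ ∈ c (g k) :: g k
      rcases Nat.lt_succ_iff_lt_or_eq.1 hj with h | h
      · exact List.mem_cons_of_mem _ (ih j h)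
      · subst h; exact List.mem_cons_self
  exact ⟨fun n => c (g n), fun j k hjk => hR _ _ (hg (k + 1)) _ (hmem k j hjk)⟩

theorem cone_dich {E : Type*} [NormedAddCommGroup E] [NormedSpace ℝ E] [FiniteDimensional ℝ E]
    (X : Set E) (θ : E) :
    (∃ F : Finset E, ↑F ⊆ X ∧ ∃ δ > 0, ∀ x, ‖x - θ‖ < δ →
      ∃ r : E → ℝ, (∀ f, 0 ≤ r f) ∧ x = ∑ f ∈ F, r f • f) ∨
    (∃ l : E →ₗ[ℝ] ℝ, l ≠ 0 ∧ l θ ≤ 0 ∧ ∀ x ∈ X, 0 ≤ l x) := by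
  let K : PointedCone ℝ E := PointedCone.hull ℝ X
  have hKc : Convex ℝ (K : Set E) := PointedCone.convex K
  have hXK : X ⊆ K := Submodule.subset_span
  by_cases hθ : θ ∈ interior (K : Set E)
  · left
    obtain ⟨b, hb1, hb2⟩ := exists_mem_interior_convexHull_affineBasis (mem_interior_iff_mem_nhds.1 hθ)
    have hbK : ∀ i, b i ∈ K := fun i => hb2 (subset_convexHull ℝ _ ⟨i, rfl⟩)
    have : ∀ i, ∃ T : Finset E, ↑T ⊆ X ∧ b i ∈ PointedCone.hull ℝ (T : Set E) :=
      fun i => Submodule.mem_span_finite_of_mem_span (hbK i)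
    choose T hT1 hT2 using this
    classical
    let F := Finset.univ.biUnion T
    have hsub : convexHull ℝ (Set.range b) ⊆ (PointedCone.hull ℝ (F : Set E) : Set E) := by
      apply convexHull_min
      · rintro _ ⟨i, rfl⟩
        have : (T i : Set E) ⊆ F := by
          intro x hx
          exact Finset.mem_biUnion.2 ⟨i, Finset.mem_univ _, hx⟩
        exact Submodule.span_mono this (hT2 i)
      · exact PointedCone.convex _
    obtain ⟨δ, hδ, hball⟩ := Metric.mem_nhds_iff.1 (mem_interior_iff_mem_nhds.1 hb1)
    refine ⟨F, ?_, δ, hδ, ?_⟩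
    · intro x hx
      obtain ⟨i, -, hi⟩ := Finset.mem_biUnion.1 hx
      exact hT1 i hi
    · intro x hx
      have : x ∈ PointedCone.hull ℝ (F : Set E) := hsub (hball (by simpa [dist_eq_norm] using hx))
      obtain ⟨r, -, hr⟩ := Submodule.mem_span_finset.1 this
      exact ⟨fun f => (r f : ℝ), fun f => (r f).2, hr.symm⟩
  · right
    by_cases hint : (interior (K : Set E)).Nonempty
    · obtain ⟨f, hf⟩ := geometric_hahn_banach_open_point hKc.interior isOpen_interior hθ
      have hle : ∀ x ∈ K, f x ≤ f θ := by
        intro x hx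
        have h1 : x ∈ closure (interior (K : Set E)) := by
          rw [hKc.closure_interior_eq_closure_of_nonempty_interior hint]
          exact subset_closure hx
        have h2 : closure (interior (K : Set E)) ⊆ {x | f x ≤ f θ} :=
          closure_minimal (fun x hx => (hf x hx).le) (isClosed_le f.continuous continuous_const)
        exact h2 h1
      have hle0 : ∀ x ∈ K, f x ≤ 0 := by
        intro x hx
        by_contra hpos
        push Not at hpos
        obtain ⟨n, hn⟩ := exists_nat_gt (f θ / f x)
        rw [div_lt_iff₀ hpos] at hn
        have := hle (n • x) (nsmul_mem hx n)
        simp at this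
        linarith
      refine ⟨-f.toLinearMap, ?_, ?_, ?_⟩
      · intro h
        obtain ⟨a, ha⟩ := hint
        have h1 := hf a ha
        have h2 : ∀ x, f x = 0 := fun x => by
          have := LinearMap.congr_fun h x
          simpa using this
        simp [h2] at h1
      · have := hle 0 K.zero_mem
        simpa using this
      · intro x hx
        have := hle0 x (hXK hx)
        simpa using this
    · have h1 : Submodule.span ℝ X < ⊤ := by
        rw [lt_top_iff_ne_top]
        intro h
        apply hint
        rw [hKc.interior_nonempty_iff_affineSpan_eq_top]
        have h2 : (K : Set E) = insert 0 (K : Set E) := (Set.insert_eq_of_mem K.zero_mem).symm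
        apply SetLike.coe_injective
        rw [h2, affineSpan_insert_zero]
        have h3 : Submodule.span ℝ (K : Set E) = ⊤ := by
          rw [eq_top_iff, ← h]
          exact Submodule.span_mono hXK
        rw [h3]
        rfl
      obtain ⟨f, hf0, hf⟩ := Submodule.exists_le_ker_of_lt_top _ h1
      have hX : ∀ x ∈ X, f x = 0 := fun x hx => hf (Submodule.subset_span hx)
      rcases le_total (f θ) 0 with h | h
      · exact ⟨f, hf0, h, fun x hx => (hX x hx).ge⟩
      · exact ⟨-f, neg_ne_zero.2 hf0, by simpa using h, fun x hx => by simp [hX x hx]⟩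


/-- cast of natural vectors to integer vectors -/
def ci {s : ℕ} (n : Fin s → ℕ) : Fin s → ℤ := fun j => (n j : ℤ)

/-- group generated by the elements of D in the kernel of A -/
def Lam {s p : ℕ} (D : Submodule ℕ (Fin s → ℤ)) (A : (Fin s → ℤ) →ₗ[ℤ] (Fin p → ℤ)) :
    Submodule ℤ (Fin s → ℤ) := Submodule.span ℤ {x | x ∈ D ∧ A x = 0}

theorem Lam_ker {s p : ℕ} {D : Submodule ℕ (Fin s → ℤ)} {A : (Fin s → ℤ) →ₗ[ℤ] (Fin p → ℤ)}
    {x : Fin s → ℤ} (hx : x ∈ Lam D A) : A x = 0 := by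
  have : Lam D A ≤ LinearMap.ker A := Submodule.span_le.2 fun y hy => hy.2
  exact this hx

theorem Lam_of {s p : ℕ} {D : Submodule ℕ (Fin s → ℤ)} {A : (Fin s → ℤ) →ₗ[ℤ] (Fin p → ℤ)}
    {x : Fin s → ℤ} (hx : x ∈ D) (h : A x = 0) : x ∈ Lam D A := Submodule.subset_span ⟨hx, h⟩

theorem Lam_comp {s p p' : ℕ} {D : Submodule ℕ (Fin s → ℤ)} {A : (Fin s → ℤ) →ₗ[ℤ] (Fin p → ℤ)}
    (B : (Fin p → ℤ) →ₗ[ℤ] (Fin p' → ℤ)) : Lam D A ≤ Lam D (B ∘ₗ A) :=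
  Submodule.span_mono fun x hx => ⟨hx.1, by simp [hx.2]⟩

theorem Lam_diff {s p : ℕ} {D : Submodule ℕ (Fin s → ℤ)} {A : (Fin s → ℤ) →ₗ[ℤ] (Fin p → ℤ)}
    {x : Fin s → ℤ} (hx : x ∈ Lam D A) :
    ∃ a b, a ∈ D ∧ A a = 0 ∧ b ∈ D ∧ A b = 0 ∧ x = a - b := by
  induction hx using Submodule.span_induction with
  | mem x h => exact ⟨x, 0, h.1, h.2, D.zero_mem, map_zero _, by simp⟩
  | zero => exact ⟨0, 0, D.zero_mem, map_zero _, D.zero_mem, map_zero _, by simp⟩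
  | add x y _ _ h1 h2 =>
    obtain ⟨a, b, ha, ha', hb, hb', rfl⟩ := h1
    obtain ⟨c, d, hc, hc', hd, hd', rfl⟩ := h2
    exact ⟨a + c, b + d, D.add_mem ha hc, by simp [ha', hc'], D.add_mem hb hd, by simp [hb', hd'],
      by abel⟩
  | smul z x _ h1 =>
    obtain ⟨a, b, ha, ha', hb, hb', rfl⟩ := h1
    obtain ⟨n, rfl | rfl⟩ := z.eq_nat_or_neg
    · refine ⟨n • a, n • b, D.smul_mem _ ha, by rw [map_nsmul, ha', smul_zero], D.smul_mem _ hb,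
        by rw [map_nsmul, hb', smul_zero], ?_⟩
      rw [natCast_zsmul, smul_sub]
    · refine ⟨n • b, n • a, D.smul_mem _ hb, by rw [map_nsmul, hb', smul_zero], D.smul_mem _ ha,
        by rw [map_nsmul, ha', smul_zero], ?_⟩
      rw [neg_smul, natCast_zsmul, smul_sub, neg_sub]

/-- divisibility of vectors -/
def Dv {s : ℕ} (e : ℕ) (x : Fin s → ℤ) : Prop := ∃ z : Fin s → ℤ, x = (e : ℤ) • z

theorem Dv.add {s e : ℕ} {x y : Fin s → ℤ} (h : Dv e x) (h' : Dv e y) : Dv e (x + y) := by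
  obtain ⟨a, rfl⟩ := h
  obtain ⟨b, rfl⟩ := h'
  exact ⟨a + b, by rw [smul_add]⟩

theorem Dv.of_dvd {s e e' : ℕ} {x : Fin s → ℤ} (h : Dv e x) (h' : e' ∣ e) : Dv e' x := by
  obtain ⟨a, rfl⟩ := h
  obtain ⟨b, rfl⟩ := h'
  exact ⟨(b : ℤ) • a, by rw [smul_smul]; push_cast; rfl⟩

theorem unif_e {s p : ℕ} {D : Submodule ℕ (Fin s → ℤ)} {A : (Fin s → ℤ) →ₗ[ℤ] (Fin p → ℤ)}
    (h : ∀ x, A x = 0 → ∃ e : ℕ, 0 < e ∧ (e : ℤ) • x ∈ Lam D A) :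
    ∃ e : ℕ, 0 < e ∧ ∀ x, A x = 0 → Dv e x → x ∈ Lam D A := by
  obtain ⟨T, hT⟩ := (IsNoetherian.noetherian (LinearMap.ker A) : (LinearMap.ker A).FG)
  have hk : ∀ x : Fin s → ℤ, ∃ e : ℕ, 0 < e ∧ (x ∈ T → (e : ℤ) • x ∈ Lam D A) := by
    intro x
    by_cases hx : x ∈ T
    · obtain ⟨e, he, h1⟩ := h x (by
        have : x ∈ LinearMap.ker A := hT ▸ Submodule.subset_span hx
        exact this)
      exact ⟨e, he, fun _ => h1⟩
    · exact ⟨1, one_pos, fun h => absurd h hx⟩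
  choose e he h1 using hk
  refine ⟨∏ x ∈ T, e x, Finset.prod_pos fun x _ => he x, ?_⟩
  rintro _ hx ⟨z, rfl⟩
  set N := ∏ x ∈ T, e x with hN
  have hNpos : 0 < N := Finset.prod_pos fun x _ => he x
  have hz : z ∈ LinearMap.ker A := by
    rw [LinearMap.mem_ker]
    rw [map_smul] at hx
    exact (smul_eq_zero.1 hx).resolve_left (by positivity)
  have : Submodule.span ℤ (T : Set (Fin s → ℤ)) ≤ (Lam D A).comap ((N : ℤ) • LinearMap.id) := by
    rw [Submodule.span_le]
    intro x hx
    change (N : ℤ) • x ∈ Lam D A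
    obtain ⟨k, hk⟩ := Finset.dvd_prod_of_mem e hx
    rw [hN, hk]
    push_cast
    rw [mul_comm, mul_smul]
    exact Submodule.smul_mem _ _ (h1 x hx)
  rw [hT] at this
  exact this hz

theorem residue {s p : ℕ} (D : (Fin s → ℕ) → Submodule ℕ (Fin s → ℤ))
    (hw : ∀ f : ℕ → (Fin s → ℕ), ∃ j k, j < k ∧ ci (f k) - ci (f j) ∈ D (f j))
    (A : (Fin s → ℤ) →ₗ[ℤ] (Fin p → ℤ)) (V : Filter (Fin s → ℕ)) [V.NeBot]
    (Pr : (Fin s → ℕ) → Prop)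
    (h1 : ∀ e : ℕ, 0 < e → ∃ i, Pr i ∧ ∀ᶠ n in V, Dv e (ci n - ci i) ∧ A (ci n - ci i) = 0)
    (h2 : ∀ i, Pr i → ∃ e : ℕ, 0 < e ∧ ∀ x, A x = 0 → Dv e x → x ∈ Lam (D i) A) :
    ∃ i, Pr i ∧ ∀ᶠ n in V, ci n - ci i ∈ Lam (D i) A := by
  by_contra hcon
  push Not at hcon
  have h2' : ∀ i, ∃ e : ℕ, 0 < e ∧ (Pr i → ∀ x, A x = 0 → Dv e x → x ∈ Lam (D i) A) := by
    intro i
    by_cases h : Pr i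
    · obtain ⟨e, he, h'⟩ := h2 i h
      exact ⟨e, he, fun _ => h'⟩
    · exact ⟨1, one_pos, fun h' => absurd h' h⟩
  choose e he h3 using h2'
  obtain ⟨f, hf1, hf2⟩ := exists_seq_of_forall_finset_exists
    (fun i => Pr i ∧ ∀ᶠ n in V, A (ci n - ci i) = 0)
    (fun j k => ci k - ci j ∉ Lam (D j) A) (by
      intro T hT
      obtain ⟨i, hi, hi2⟩ := h1 (∏ j ∈ T, e j) (Finset.prod_pos fun j _ => he j)
      refine ⟨i, ⟨hi, hi2.mono fun n hn => hn.2⟩, ?_⟩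
      intro j hj hmem
      apply hcon j (hT j hj).1
      filter_upwards [hi2] with n hn
      have : ci n - ci i ∈ Lam (D j) A :=
        h3 j (hT j hj).1 _ hn.2 (hn.1.of_dvd (Finset.dvd_prod_of_mem e hj))
      have := add_mem this hmem
      rw [sub_add_sub_cancel] at this
      exact not_not.2 this)
  obtain ⟨j, k, hjk, hD⟩ := hw f
  apply hf2 j k hjk
  apply Lam_of hD
  obtain ⟨n, hn1, hn2⟩ := ((hf1 j).2.and (hf1 k).2).exists
  have : ci (f k) - ci (f j) = (ci n - ci (f j)) - (ci n - ci (f k)) := by abel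
  rw [this, map_sub, hn1, hn2, sub_zero]

theorem ultra_const {α β : Type*} [Finite β] (U : Ultrafilter α) (f : α → β) :
    ∃ b, ∀ᶠ x in (U : Filter α), f x = b := by
  have h : ∀ᶠ x in (U : Filter α), ∃ b, f x = b := Eventually.of_forall fun x => ⟨_, rfl⟩
  by_contra hcon
  push Not at hcon
  have : ∀ᶠ x in (U : Filter α), ∀ b, f x ≠ b := by
    rw [eventually_all]
    intro b
    exact hcon b
  obtain ⟨x, hx⟩ := this.exists
  exact hx _ rfl

/-- the induction state -/
structure St {s : ℕ} (D : (Fin s → ℕ) → Submodule ℕ (Fin s → ℤ)) (U : Ultrafilter (Fin s → ℕ))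
    (p : ℕ) (A : (Fin s → ℤ) →ₗ[ℤ] (Fin p → ℤ)) (Good : (Fin s → ℕ) → Prop) : Prop where
  surj : Function.Surjective A
  h1 : ∀ n, ∀ e : ℕ, 0 < e → ∃ m, Good m ∧ ci n - ci m ∈ Lam (D m) A ∧ Dv e (ci n - ci m)
  h2 : ∀ m, Good m → ∀ x, A x = 0 → ∃ e : ℕ, 0 < e ∧ (e : ℤ) • x ∈ Lam (D m) A
  h3 : ∀ m, Good m → ∀ G : Set (Fin s → ℤ), G.Finite → G ⊆ D m →
    ∀ᶠ n in (U : Filter (Fin s → ℕ)), ¬ ∃ g ∈ Submodule.span ℕ G, ci n - ci m - g ∈ Lam (D m) A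
  h4 : ∃ w : Fin s → ℤ, A w = 0 ∧ ∀ j, 0 < w j ∨
    ∃ h : (Fin p → ℝ) →ₗ[ℝ] ℝ, ∀ x : Fin s → ℤ, (x j : ℝ) = h (ri p (A x))

theorem Dv_of_zmod {s : ℕ} {e : ℕ} {x y : Fin s → ℤ}
    (h : (fun j => ((x j : ℤ) : ZMod e)) = fun j => ((y j : ℤ) : ZMod e)) : Dv e (x - y) := by
  have : ∀ j, (e : ℤ) ∣ x j - y j := by
    intro j
    have := congrFun h j
    rw [← ZMod.intCast_zmod_eq_zero_iff_dvd]
    simpa [sub_eq_zero] using this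
  choose z hz using this
  exact ⟨z, funext hz⟩

theorem bounded_case {s : ℕ} {D : (Fin s → ℕ) → Submodule ℕ (Fin s → ℤ)}
    {U : Ultrafilter (Fin s → ℕ)}
    (hw : ∀ f : ℕ → (Fin s → ℕ), ∃ j k, j < k ∧ ci (f k) - ci (f j) ∈ D (f j))
    {p : ℕ} {A : (Fin s → ℤ) →ₗ[ℤ] (Fin p → ℤ)} {Good : (Fin s → ℕ) → Prop}
    (st : St D U p A Good) (R : ℝ)
    (hR : ∀ᶠ n in (U : Filter (Fin s → ℕ)), ‖ri p (A (ci n))‖ ≤ R) : False := by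
  have hconst : ∃ a, ∀ᶠ n in (U : Filter (Fin s → ℕ)), A (ci n) = a := by
    have hfin := ri_finite (p := p) R
    have : Finite {y : Fin p → ℤ | ‖ri p y‖ ≤ R} := hfin
    classical
    obtain ⟨b, hb⟩ := ultra_const U (fun n : Fin s → ℕ =>
      (if h : ‖ri p (A (ci n))‖ ≤ R then some ⟨A (ci n), h⟩ else none :
        Option {y : Fin p → ℤ | ‖ri p y‖ ≤ R}))
    obtain ⟨n0, h0, h0'⟩ := (hb.and hR).exists
    refine ⟨A (ci n0), ?_⟩
    filter_upwards [hb, hR] with n hn hn'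
    rw [← h0] at hn
    simp only [hn', h0', dif_pos] at hn
    simpa using hn
  obtain ⟨a, ha⟩ := hconst
  obtain ⟨i, hi, hi2⟩ := residue D hw A U Good (by
    intro e he
    have : NeZero e := ⟨he.ne'⟩
    obtain ⟨b, hb⟩ := ultra_const U (fun n : Fin s → ℕ => fun j => ((ci n j : ℤ) : ZMod e))
    obtain ⟨n0, h0, h0'⟩ := (hb.and ha).exists
    obtain ⟨m, hm, hm2, hm3⟩ := st.h1 n0 e he
    refine ⟨m, hm, ?_⟩
    filter_upwards [hb, ha] with n hn hn'
    have e1 : ci n - ci m = (ci n - ci n0) + (ci n0 - ci m) := by abel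
    rw [e1]
    refine ⟨Dv.add (Dv_of_zmod (hn.trans h0.symm)) hm3, ?_⟩
    rw [map_add, Lam_ker hm2, map_sub, hn', h0', sub_self, add_zero])
    (fun i hi => unif_e (st.h2 i hi))
  obtain ⟨n, hn, hn'⟩ := (hi2.and (st.h3 i hi ∅ Set.finite_empty (by simp))).exists
  exact hn' ⟨0, Submodule.zero_mem _, by simpa using hn⟩


theorem exists_theta {s p : ℕ} (U : Ultrafilter (Fin s → ℕ)) (A : (Fin s → ℤ) →ₗ[ℤ] (Fin p → ℤ))
    (ht : Tendsto (fun n => ‖ri p (A (ci n))‖) (U : Filter (Fin s → ℕ)) atTop) :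
    ∃ θ : Fin p → ℝ, ‖θ‖ = 1 ∧
      Tendsto (fun n => (‖ri p (A (ci n))‖)⁻¹ • ri p (A (ci n))) (U : Filter (Fin s → ℕ)) (𝓝 θ) := by
  have h1 : ∀ᶠ n in (U : Filter (Fin s → ℕ)),
      (‖ri p (A (ci n))‖)⁻¹ • ri p (A (ci n)) ∈ Metric.sphere (0 : Fin p → ℝ) 1 := by
    filter_upwards [ht.eventually_gt_atTop 0] with n hn
    rw [mem_sphere_zero_iff_norm, norm_smul, norm_inv, norm_norm, inv_mul_cancel₀ hn.ne']
  obtain ⟨θ, hθ, hle⟩ := (isCompact_sphere (0 : Fin p → ℝ) 1).ultrafilter_le_nhds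
    (U.map fun n => (‖ri p (A (ci n))‖)⁻¹ • ri p (A (ci n))) (by
      rw [le_principal_iff]; exact h1)
  exact ⟨θ, by simpa using hθ, hle⟩

/-- the cone condition -/
def ConeP {s p : ℕ} (D : Submodule ℕ (Fin s → ℤ)) (A : (Fin s → ℤ) →ₗ[ℤ] (Fin p → ℤ))
    (S : Submodule ℝ (Fin p → ℝ)) (θ : Fin p → ℝ) : Prop :=
  ∃ F : Finset (Fin s → ℤ), (∀ f ∈ F, f ∈ D ∧ ri p (A f) ∈ S) ∧ ∃ δ > 0, ∀ x ∈ S, ‖x - θ‖ < δ →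
    ∃ r : (Fin s → ℤ) → ℝ, (∀ f, 0 ≤ r f) ∧ x = ∑ f ∈ F, r f • ri p (A f)

theorem cone_or {s p : ℕ} (D : Submodule ℕ (Fin s → ℤ)) (A : (Fin s → ℤ) →ₗ[ℤ] (Fin p → ℤ))
    (S : Submodule ℝ (Fin p → ℝ)) (θ : Fin p → ℝ) (hθ : θ ∈ S) : ConeP D A S θ ∨
    ∃ l : (Fin p → ℝ) →ₗ[ℝ] ℝ, (∃ x ∈ S, l x ≠ 0) ∧ l θ ≤ 0 ∧
      ∀ f ∈ D, ri p (A f) ∈ S → 0 ≤ l (ri p (A f)) := by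
  rcases cone_dich (E := S) {x : S | ∃ f ∈ D, ri p (A f) = x} ⟨θ, hθ⟩ with
    ⟨F, hF, δ, hδ, h⟩ | ⟨l, hl0, hlθ, hl⟩
  · left
    have : ∀ x : S, ∃ f, x ∈ F → f ∈ D ∧ ri p (A f) = x := by
      intro x
      by_cases hx : x ∈ F
      · obtain ⟨f, h1, h2⟩ := hF hx
        exact ⟨f, fun _ => ⟨h1, h2⟩⟩
      · exact ⟨0, fun h => absurd h hx⟩
    choose c hc using this
    classical
    refine ⟨F.image c, ?_, δ, hδ, ?_⟩
    · intro f hf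
      obtain ⟨x, hx, rfl⟩ := Finset.mem_image.1 hf
      exact ⟨(hc x hx).1, (hc x hx).2 ▸ x.2⟩
    · intro x hx hxθ
      obtain ⟨r, hr, hrx⟩ := h ⟨x, hx⟩ hxθ
      have hinj : Set.InjOn c F := by
        intro x hx y hy hxy
        apply Subtype.ext
        rw [← (hc x hx).2, ← (hc y hy).2, hxy]
      refine ⟨fun f => if h : ri p (A f) ∈ S then r ⟨_, h⟩ else 0, ?_, ?_⟩
      · intro f
        dsimp only
        split_ifs
        · exact hr _
        · exact le_rfl
      · rw [Finset.sum_image hinj]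
        have h2 := congrArg Subtype.val hrx
        simp only [Submodule.coe_sum, Submodule.coe_smul] at h2
        rw [h2]
        apply Finset.sum_congr rfl
        intro y hy
        have := (hc y hy).2
        simp [this]
  · right
    obtain ⟨g, hg⟩ := LinearMap.exists_extend l
    have hg' : ∀ x : S, g x = l x := fun x => LinearMap.congr_fun hg x
    refine ⟨g, ?_, ?_, ?_⟩
    · by_contra hcon
      push Not at hcon
      apply hl0
      ext x
      rw [← hg' x, hcon x x.2]
      rfl
    · exact (hg' ⟨θ, hθ⟩).trans_le hlθ
    · intro f hf hfS
      have := hl ⟨_, hfS⟩ ⟨f, hf, rfl⟩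
      rwa [← hg'] at this

theorem posK {s : ℕ} (w x : Fin s → ℤ) : ∃ K : ℤ, ∀ j, 0 < w j → 0 < x j + K * w j := by
  refine ⟨1 + ∑ i, |x i|, fun j hj => ?_⟩
  have h1 : |x j| ≤ ∑ i, |x i| :=
    Finset.single_le_sum (f := fun i => |x i|) (fun i _ => abs_nonneg _) (Finset.mem_univ j)
  have h2 := neg_abs_le (x j)
  have h3 := abs_nonneg (x j)
  nlinarith

theorem lin_lower {p : ℕ} (h : (Fin p → ℝ) →ₗ[ℝ] ℝ) {C : ℝ} (hC : ∀ x, |h x| ≤ C * ‖x‖)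
    (hC0 : 0 < C)
    (θ y : Fin p → ℝ) (t ε : ℝ) (hy : ‖y - t • θ‖ < ε) : |h y - t * h θ| < C * ε := by
  have : h y - t * h θ = h (y - t • θ) := by simp
  rw [this]
  exact (hC _).trans_lt (by nlinarith)

section C
variable {s : ℕ} {D : (Fin s → ℕ) → Submodule ℕ (Fin s → ℤ)}
    {U : Ultrafilter (Fin s → ℕ)}
    {p : ℕ} {A : (Fin s → ℤ) →ₗ[ℤ] (Fin p → ℤ)} {Good : (Fin s → ℕ) → Prop}

theorem lemmaC
    (hw : ∀ f : ℕ → (Fin s → ℕ), ∃ j k, j < k ∧ ci (f k) - ci (f j) ∈ D (f j))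
    (st : St D U p A Good) (θ : Fin p → ℝ) (S : Submodule ℝ (Fin p → ℝ)) (ε0 : ℝ) (h0 : 0 < ε0)
    (hS : ∀ ε, 0 < ε → ε ≤ ε0 → Submodule.span ℝ (ri p '' Yset θ ε) = S)
    (hpos : ∀ (j : Fin s) (h : (Fin p → ℝ) →ₗ[ℝ] ℝ), (∀ x : Fin s → ℤ, (x j : ℝ) = h (ri p (A x))) →
      0 ≤ h θ) (n : Fin s → ℕ) (e : ℕ) (he : 0 < e) :
    ∃ m, Good m ∧ ConeP (D m) A S θ ∧ Dv e (ci n - ci m) ∧ ri p (A (ci n - ci m)) ∈ S := by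
  have hθS := theta_mem_S θ S ε0 h0 hS
  by_contra hcon
  push Not at hcon
  have hl : ∀ m, ∃ l : (Fin p → ℝ) →ₗ[ℝ] ℝ,
      Good m → Dv e (ci n - ci m) → ri p (A (ci n - ci m)) ∈ S →
      (∃ x ∈ S, l x ≠ 0) ∧ l θ ≤ 0 ∧ ∀ f ∈ D m, ri p (A f) ∈ S → 0 ≤ l (ri p (A f)) := by
    intro m
    rcases cone_or (D m) A S θ hθS with h | ⟨l, hl⟩
    · exact ⟨0, fun h1 h2 h3 => absurd h3 (hcon m h1 h h2)⟩
    · exact ⟨l, fun _ _ _ => hl⟩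
  choose l hl using hl
  obtain ⟨w, hw0, hwj⟩ := st.h4
  obtain ⟨f, hf⟩ := seq_ext
    (fun L : List (Fin s → ℕ) => (∀ m ∈ L, Good m ∧ Dv e (ci n - ci m) ∧ ri p (A (ci n - ci m)) ∈ S) ∧
      L.Pairwise fun k j => l j (ri p (A (ci k - ci j))) < 0)
    (fun j k => (Good j ∧ Dv e (ci n - ci j) ∧ ri p (A (ci n - ci j)) ∈ S) ∧
      (Good k ∧ Dv e (ci n - ci k) ∧ ri p (A (ci n - ci k)) ∈ S) ∧
      l j (ri p (A (ci k - ci j))) < 0)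
    ⟨by simp, List.Pairwise.nil⟩ (by
      rintro L ⟨hL1, hL2⟩
      rcases L with _ | ⟨b, L⟩
      · obtain ⟨m, hm1, hm2, hm3⟩ := st.h1 n e he
        refine ⟨m, ?_, by simp⟩
        intro m' hm'
        simp only [List.mem_singleton] at hm'
        subst hm'
        refine ⟨hm1, hm3, ?_⟩
        rw [Lam_ker hm2, map_zero]
        exact S.zero_mem
      · have hb := hL1 b List.mem_cons_self
        have hlb := hl b hb.1 hb.2.1 hb.2.2
        rw [List.pairwise_cons] at hL2
        choose C hC0 hC using fun j => lin_bound (l j)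
        -- choose epsilon
        have hev : ∀ᶠ ε in 𝓝[>] (0 : ℝ), ε < ε0 ∧
            (∀ j ∈ L.toFinset, e * (C j * ε) < - l j (ri p (A (ci b - ci j)))) ∧
            ∀ i : Fin s, w i ≤ 0 → ∃ h : (Fin p → ℝ) →ₗ[ℝ] ℝ,
              (∀ x : Fin s → ℤ, (x i : ℝ) = h (ri p (A x))) ∧
              ∃ H, 0 < H ∧ (∀ x, |h x| ≤ H * ‖x‖) ∧ H * ε < 1 := by
          refine Eventually.and ?_ (Eventually.and ?_ ?_)
          · exact mem_nhdsWithin_of_mem_nhds (Iio_mem_nhds h0)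
          · rw [Filter.eventually_all_finset]
            intro j hj
            have hneg := hL2.1 j (List.mem_toFinset.1 hj)
            have ht : Tendsto (fun ε : ℝ => (e : ℝ) * (C j * ε)) (𝓝[>] 0) (𝓝 0) := by
              have : Tendsto (fun ε : ℝ => (e : ℝ) * (C j * ε)) (𝓝 0) (𝓝 ((e : ℝ) * (C j * 0))) :=
                (Continuous.tendsto (by fun_prop) _)
              simp only [mul_zero] at this
              exact this.mono_left nhdsWithin_le_nhds
            exact ht.eventually_lt_const (by linarith)
          · rw [Filter.eventually_all]
            intro i
            by_cases hi : w i ≤ 0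
            · obtain ⟨h, hh⟩ := (hwj i).resolve_left (not_lt.2 hi)
              obtain ⟨H, hH, hHb⟩ := lin_bound h
              have ht : Tendsto (fun ε : ℝ => H * ε) (𝓝[>] 0) (𝓝 0) := by
                have : Tendsto (fun ε : ℝ => H * ε) (𝓝 0) (𝓝 (H * 0)) :=
                  (Continuous.tendsto (by fun_prop) _)
                simp only [mul_zero] at this
                exact this.mono_left nhdsWithin_le_nhds
              filter_upwards [ht.eventually_lt_const one_pos] with ε hε _
              exact ⟨h, hh, H, hH, hHb, hε⟩
            · exact Eventually.of_forall fun ε h => absurd h hi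
        obtain ⟨ε, ⟨hε0, hεL, hεw⟩, hε⟩ := (hev.and self_mem_nhdsWithin).exists
        have hε : 0 < ε := hε
        obtain ⟨y, t, ht, hy, hly⟩ := lemY θ S ε0 h0 hS (l b) hlb.1 hlb.2.1 ε hε 0
        obtain ⟨x, rfl⟩ := st.surj y
        have hyS : ri p (A x) ∈ S := by
          rw [← hS ε hε hε0.le]
          exact Submodule.subset_span ⟨A x, ⟨t, hy⟩, rfl⟩
        obtain ⟨K, hK⟩ := posK w x
        have hx' : ∀ j, 0 ≤ x j + K * w j := by
          intro j
          by_cases hj : w j ≤ 0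
          · obtain ⟨h, hh, H, hH, hHb, hHε⟩ := hεw j hj
            have hwj0 : w j = 0 := by
              have := hh w
              rw [hw0, map_zero, map_zero] at this
              exact_mod_cast this
            rw [hwj0, mul_zero, add_zero]
            have h1 := lin_lower h hHb hH θ _ t ε hy
            have h2 := hpos j h hh
            rw [← hh x] at h1
            have h3 : (-1 : ℝ) < x j := by
              have := (abs_lt.1 h1).1
              nlinarith
            have : (-1 : ℤ) < x j := by exact_mod_cast h3
            omega
          · exact (hK j (not_le.1 hj)).le
        obtain ⟨n', hn'⟩ : ∃ n' : Fin s → ℕ, ci n' - ci b = (e : ℤ) • (x + K • w) := by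
          refine ⟨fun j => b j + e * (x j + K * w j).toNat, ?_⟩
          ext j
          simp [ci, Int.toNat_of_nonneg (hx' j)]
        have hAn' : A (ci n' - ci b) = (e : ℤ) • A x := by
          rw [hn', map_smul, map_add, map_smul, hw0, smul_zero, add_zero]
        have hriAn' : ri p (A (ci n' - ci b)) = (e : ℝ) • ri p (A x) := by
          rw [hAn', map_smul]
          ext j; simp
        obtain ⟨m, hm1, hm2, hm3⟩ := st.h1 n' e he
        have hmker := Lam_ker hm2
        have hAm : ∀ v : Fin s → ℕ, ri p (A (ci m - ci v)) = (e : ℝ) • ri p (A x) +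
            ri p (A (ci b - ci v)) := by
          intro v
          have : ci m - ci v = (ci n' - ci b) + (ci b - ci v) - (ci n' - ci m) := by abel
          rw [this, map_sub, hmker, sub_zero, map_add, map_add, hriAn']
        refine ⟨m, ?_, ?_⟩
        · intro m' hm'
          rcases List.mem_cons.1 hm' with rfl | hm'
          · refine ⟨hm1, ?_, ?_⟩
            · have : ci n - ci m' = (ci n - ci b) + ((e : ℤ) • (-(x + K • w))) + (ci n' - ci m') := by
                rw [smul_neg, ← hn']; abel
              rw [this]
              exact (hb.2.1.add ⟨_, rfl⟩).add hm3
            · have : ci n - ci m' = -(ci m' - ci n) := by abel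
              rw [this, map_neg, map_neg, hAm]
              apply S.neg_mem
              apply S.add_mem (S.smul_mem _ hyS)
              rw [← neg_sub, map_neg, map_neg]
              exact S.neg_mem hb.2.2
          · exact hL1 m' hm'
        · rw [List.pairwise_cons]
          refine ⟨?_, List.pairwise_cons.2 hL2⟩
          intro j hj
          rw [hAm, map_add, map_smul, smul_eq_mul]
          have hepos : (0 : ℝ) < e := by exact_mod_cast he
          rcases List.mem_cons.1 hj with rfl | hj'
          · rw [sub_self, map_zero, map_zero, map_zero, add_zero]
            exact mul_neg_of_pos_of_neg hepos hly
          · have h1 := hεL j (List.mem_toFinset.2 hj')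
            have hjc := hL1 j hj
            have h2 := (hl j hjc.1 hjc.2.1 hjc.2.2).2.1
            have h3 := (abs_lt.1 (lin_lower (l j) (hC j) (hC0 j) θ _ t ε hy)).2
            have h4 : l j (ri p (A x)) < C j * ε := by nlinarith
            have h5 := mul_lt_mul_of_pos_left h4 hepos
            linarith)
    (by
      rintro i L ⟨h1, h2⟩ j hj
      exact ⟨h1 j (List.mem_cons_of_mem _ hj), h1 i List.mem_cons_self, (List.pairwise_cons.1 h2).1 j hj⟩)
  obtain ⟨j, k, hjk, hD⟩ := hw f
  obtain ⟨hj, hk, hneg⟩ := hf j k hjk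
  have := (hl _ hj.1 hj.2.1 hj.2.2).2.2 _ hD (by
    have : ci (f k) - ci (f j) = (ci n - ci (f j)) - (ci n - ci (f k)) := by abel
    rw [this, map_sub, map_sub]
    exact S.sub_mem hj.2.2 hk.2.2)
  linarith

end C


section C
variable {s : ℕ} {p p' : ℕ} {A : (Fin s → ℤ) →ₗ[ℤ] (Fin p → ℤ)} {B : (Fin p → ℤ) →ₗ[ℤ] (Fin p' → ℤ)}

theorem ri_sum {ι : Type*} {p : ℕ} (F : Finset ι) (r : ι → ℝ) (v : ι → Fin p → ℤ) :
    (∑ f ∈ F, r f • ri p (v f)) - ri p (∑ f ∈ F, ⌊r f⌋ • v f) =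
      ∑ f ∈ F, Int.fract (r f) • ri p (v f) := by
  rw [map_sum, ← Finset.sum_sub_distrib]
  apply Finset.sum_congr rfl
  intro f _
  ext j
  simp only [Pi.sub_apply, Pi.smul_apply, smul_eq_mul, ri_apply, Int.fract]
  push_cast
  ring

theorem fract_bound {ι : Type*} {p : ℕ} (F : Finset ι) (r : ι → ℝ) (v : ι → Fin p → ℤ) :
    ‖∑ f ∈ F, Int.fract (r f) • ri p (v f)‖ ≤ ∑ f ∈ F, ‖ri p (v f)‖ := by
  refine (norm_sum_le _ _).trans (Finset.sum_le_sum fun f _ => ?_)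
  rw [norm_smul, Real.norm_eq_abs, abs_of_nonneg (Int.fract_nonneg _)]
  have := (Int.fract_lt_one (r f)).le
  nlinarith [norm_nonneg (ri p (v f))]

theorem h2new {D : Submodule ℕ (Fin s → ℤ)} {S : Submodule ℝ (Fin p → ℝ)} {θ : Fin p → ℝ} (hθ : θ ∈ S)
    (hB : ∀ x, B x = 0 ↔ ri p x ∈ S) (hc : ConeP D A S θ)
    (h2 : ∀ x, A x = 0 → ∃ e : ℕ, 0 < e ∧ (e : ℤ) • x ∈ Lam D A) (x : Fin s → ℤ)
    (hx : (B ∘ₗ A) x = 0) : ∃ e : ℕ, 0 < e ∧ (e : ℤ) • x ∈ Lam D (B ∘ₗ A) := by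
  obtain ⟨F, hF, δ, hδ, hcone⟩ := hc
  have hxS : ri p (A x) ∈ S := (hB _).1 hx
  -- real combination
  obtain ⟨r, hr⟩ : ∃ r : (Fin s → ℤ) → ℝ, ri p (A x) = ∑ f ∈ F, r f • ri p (A f) := by
    obtain ⟨η, hη, hηδ⟩ : ∃ η : ℝ, 0 < η ∧ η * ‖ri p (A x)‖ < δ := by
      refine ⟨δ / (‖ri p (A x)‖ + 1), by positivity, ?_⟩
      rw [div_mul_eq_mul_div, div_lt_iff₀ (by positivity)]
      nlinarith
    obtain ⟨r1, -, hr1⟩ := hcone θ hθ (by simpa using hδ)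
    obtain ⟨r2, -, hr2⟩ := hcone (θ + η • ri p (A x)) (S.add_mem hθ (S.smul_mem _ hxS)) (by
      rw [add_sub_cancel_left, norm_smul, Real.norm_eq_abs, abs_of_pos hη]
      exact hηδ)
    refine ⟨fun f => η⁻¹ * (r2 f - r1 f), ?_⟩
    have : ri p (A x) = η⁻¹ • ((θ + η • ri p (A x)) - θ) := by
      rw [add_sub_cancel_left, smul_smul, inv_mul_cancel₀ hη.ne', one_smul]
    rw [this, hr2]
    conv_lhs => rw [hr1]
    rw [← Finset.sum_sub_distrib, Finset.smul_sum]
    apply Finset.sum_congr rfl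
    intro f _
    rw [mul_smul, sub_smul]
  -- pigeonhole
  let z : ℕ → (Fin p → ℤ) := fun k => (k : ℤ) • A x - ∑ f ∈ F, ⌊(k : ℝ) * r f⌋ • A f
  have hz : ∀ k, ‖ri p (z k)‖ ≤ ∑ f ∈ F, ‖ri p (A f)‖ := by
    intro k
    have e1 : ri p ((k : ℤ) • A x) = ∑ f ∈ F, ((k : ℝ) * r f) • ri p (A f) := by
      have : ri p ((k : ℤ) • A x) = (k : ℝ) • ri p (A x) := by ext j; simp [ri_apply]
      rw [this, hr, Finset.smul_sum]
      exact Finset.sum_congr rfl fun f _ => by rw [mul_smul]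
    have : ri p (z k) = ∑ f ∈ F, Int.fract ((k : ℝ) * r f) • ri p (A f) := by
      simp only [z]
      rw [map_sub, e1, ri_sum]
    rw [this]
    exact fract_bound _ _ _
  obtain ⟨k1, -, k2, -, hne, hk⟩ := Set.infinite_univ.exists_ne_map_eq_of_mapsTo
    (f := z) (t := {y : Fin p → ℤ | ‖ri p y‖ ≤ ∑ f ∈ F, ‖ri p (A f)‖})
    (fun k _ => hz k) (ri_finite _)
  have hmain : ∀ k1 k2 : ℕ, k1 < k2 → z k1 = z k2 →
      ∃ e : ℕ, 0 < e ∧ (e : ℤ) • x ∈ Lam D (B ∘ₗ A) := by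
    intro k1 k2 hlt hk
    let g : Fin s → ℤ := ∑ f ∈ F, (⌊(k2 : ℝ) * r f⌋ - ⌊(k1 : ℝ) * r f⌋) • f
    have hg : g ∈ Lam D (B ∘ₗ A) := by
      apply Submodule.sum_mem
      intro f hf
      apply Submodule.smul_mem
      exact Lam_of (hF f hf).1 ((hB _).2 (hF f hf).2)
    have hker : A (((k2 - k1 : ℕ) : ℤ) • x - g) = 0 := by
      have e1 : A g = ∑ f ∈ F, ⌊(k2 : ℝ) * r f⌋ • A f - ∑ f ∈ F, ⌊(k1 : ℝ) * r f⌋ • A f := by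
        simp only [g]
        rw [map_sum, ← Finset.sum_sub_distrib]
        exact Finset.sum_congr rfl fun f _ => by rw [map_smul, sub_smul]
      have e2 : (((k2 - k1 : ℕ) : ℤ)) • A x = (k2 : ℤ) • A x - (k1 : ℤ) • A x := by
        rw [← sub_smul]; congr 1; omega
      rw [map_sub, map_smul, e1, e2]
      simp only [z] at hk
      rw [sub_eq_sub_iff_add_eq_add] at hk
      rw [sub_sub_sub_comm, sub_eq_zero, sub_eq_sub_iff_add_eq_add, ← hk]
    obtain ⟨e, he, hmem⟩ := h2 _ hker
    refine ⟨e * (k2 - k1), Nat.mul_pos he (by omega), ?_⟩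
    have h3 := add_mem (Lam_comp B hmem) (Submodule.smul_mem _ (e : ℤ) hg)
    rw [smul_sub, sub_add_cancel, smul_smul] at h3
    exact_mod_cast h3
  rcases lt_or_gt_of_ne hne with h | h
  · exact hmain k1 k2 h hk
  · exact hmain k2 k1 h hk.symm

theorem h4new {S : Submodule ℝ (Fin p → ℝ)} {θ : Fin p → ℝ} {ε0 : ℝ} (h0 : 0 < ε0)
    (hS : ∀ ε, 0 < ε → ε ≤ ε0 → Submodule.span ℝ (ri p '' Yset θ ε) = S)
    (hA : Function.Surjective A)
    (hB : ∀ x, B x = 0 ↔ ri p x ∈ S) (σ : (Fin p' → ℝ) →ₗ[ℝ] (Fin p → ℝ))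
    (hσ : ∀ x, ri p x - σ (ri p' (B x)) ∈ S)
    (hpos : ∀ (j : Fin s) (h : (Fin p → ℝ) →ₗ[ℝ] ℝ), (∀ x : Fin s → ℤ, (x j : ℝ) = h (ri p (A x))) →
      0 ≤ h θ)
    (h4 : ∃ w : Fin s → ℤ, A w = 0 ∧ ∀ j, 0 < w j ∨
      ∃ h : (Fin p → ℝ) →ₗ[ℝ] ℝ, ∀ x : Fin s → ℤ, (x j : ℝ) = h (ri p (A x))) :
    ∃ w : Fin s → ℤ, (B ∘ₗ A) w = 0 ∧ ∀ j, 0 < w j ∨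
      ∃ h : (Fin p' → ℝ) →ₗ[ℝ] ℝ, ∀ x : Fin s → ℤ, (x j : ℝ) = h (ri p' ((B ∘ₗ A) x)) := by
  obtain ⟨w, hw0, hwj⟩ := h4
  have hh : ∀ j, ∃ h : (Fin p → ℝ) →ₗ[ℝ] ℝ, ∃ C : ℝ, 0 < C ∧ (∀ x, |h x| ≤ C * ‖x‖) ∧
      (¬ 0 < w j → ∀ x : Fin s → ℤ, (x j : ℝ) = h (ri p (A x))) := by
    intro j
    by_cases hj : 0 < w j
    · exact ⟨0, 1, one_pos, by intro x; simp, fun h => absurd hj h⟩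
    · obtain ⟨h, hx⟩ := (hwj j).resolve_left hj
      obtain ⟨C, hC, hb⟩ := lin_bound h
      exact ⟨h, C, hC, hb, fun _ => hx⟩
  choose h C hC0 hC hx using hh
  have hev : ∀ᶠ ε in 𝓝[>] (0 : ℝ), ε < ε0 ∧ ∀ j : Fin s, C j * ε < 1 := by
    refine Eventually.and ?_ ?_
    · exact mem_nhdsWithin_of_mem_nhds (Iio_mem_nhds h0)
    · rw [Filter.eventually_all]
      intro i
      have ht : Tendsto (fun ε : ℝ => C i * ε) (𝓝[>] 0) (𝓝 0) := by
        have : Tendsto (fun ε : ℝ => C i * ε) (𝓝 0) (𝓝 (C i * 0)) :=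
          (Continuous.tendsto (by fun_prop) _)
        simp only [mul_zero] at this
        exact this.mono_left nhdsWithin_le_nhds
      exact ht.eventually_lt_const one_pos
  obtain ⟨ε, ⟨hε0, hεC⟩, hε⟩ := (hev.and self_mem_nhdsWithin).exists
  have hε : 0 < ε := hε
  obtain ⟨y, t, ht, hy⟩ := dirichlet θ hε (∑ j, |1 / h j θ|)
  obtain ⟨x, rfl⟩ := hA y
  have hyS : ri p (A x) ∈ S := by
    rw [← hS ε hε hε0.le]
    exact Submodule.subset_span ⟨A x, ⟨t, hy⟩, rfl⟩
  obtain ⟨K, hK⟩ := posK w x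
  refine ⟨x + K • w, ?_, ?_⟩
  · rw [LinearMap.comp_apply, map_add, map_smul, hw0, smul_zero, add_zero]
    exact (hB _).2 hyS
  · intro j
    by_cases hj : 0 < w j
    · left; simpa using hK j hj
    · have hxj := hx j hj
      have hwj0 : w j = 0 := by
        have := hxj w
        rw [hw0, map_zero, map_zero] at this
        exact_mod_cast this
      rcases (hpos j (h j) hxj).lt_or_eq with hp | hz
      · left
        simp only [Pi.add_apply, Pi.smul_apply, hwj0, smul_zero, add_zero]
        have h1 := (abs_lt.1 (lin_lower (h j) (hC j) (hC0 j) θ _ t ε hy)).1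
        rw [← hxj x] at h1
        have h2 : |1 / h j θ| ≤ t :=
          (Finset.single_le_sum (f := fun i => |1 / h i θ|) (fun i _ => abs_nonneg _)
            (Finset.mem_univ j)).trans ht
        rw [abs_of_pos (by positivity), div_le_iff₀ hp] at h2
        have h3 := hεC j
        have : (0 : ℝ) < x j := by linarith
        exact_mod_cast this
      · right
        have hzS : ∀ z ∈ S, h j z = 0 := by
          have : S ≤ LinearMap.ker (h j) := by
            rw [← hS ε hε hε0.le, Submodule.span_le]
            rintro _ ⟨y, ⟨t, hy⟩, rfl⟩
            obtain ⟨x, rfl⟩ := hA y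
            have h1 := lin_lower (h j) (hC j) (hC0 j) θ _ t ε hy
            rw [← hxj x, ← hz, mul_zero, sub_zero] at h1
            have h2 := h1.trans (hεC j)
            have : |x j| < 1 := by exact_mod_cast h2
            have : x j = 0 := by
              rw [abs_lt] at this; omega
            change h j _ = 0
            rw [← hxj x, this]; simp
          exact fun z hz => this hz
        refine ⟨h j ∘ₗ σ, fun x => ?_⟩
        have := hzS _ (hσ (A x))
        rw [map_sub, sub_eq_zero] at this
        rw [hxj x, this]
        rfl

end C


theorem h3a {s q p' : ℕ} {D : Submodule ℕ (Fin s → ℤ)} (U : Ultrafilter (Fin s → ℕ))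
    (A' : (Fin s → ℤ) →ₗ[ℤ] (Fin p' → ℤ)) (t : (Fin s → ℕ) → ℝ)
    (ht : Tendsto t (U : Filter (Fin s → ℕ)) atTop)
    (hlim : Tendsto (fun n => (t n)⁻¹ * ‖ri p' (A' (ci n))‖) (U : Filter (Fin s → ℕ)) (𝓝 0))
    (m : Fin s → ℕ) (g : Fin q → Fin s → ℤ) (hg : ∀ i, g i ∈ D) (c : (Fin s → ℕ) → Fin q → ℕ)
    (hc : ∀ᶠ n in (U : Filter (Fin s → ℕ)), (ci n - ci m - ∑ i, c n i • g i ∈ Lam D A') ∧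
      ∀ c' : Fin q → ℕ, ci n - ci m - ∑ i, c' i • g i ∈ Lam D A' → ∑ i, c n i ≤ ∑ i, c' i) :
    ∀ κ : ℝ, 0 < κ → ∀ᶠ n in (U : Filter (Fin s → ℕ)), ((∑ i, c n i : ℕ) : ℝ) < κ * t n := by
  intro κ hκ
  by_contra hcon
  rw [← Ultrafilter.eventually_not] at hcon
  let w : (Fin s → ℕ) → ℝ := fun n => ((∑ i, c n i : ℕ) : ℝ)
  have hcon : ∀ᶠ n in (U : Filter (Fin s → ℕ)), κ * t n ≤ w n := hcon.mono fun n hn => not_lt.1 hn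
  have hwt : Tendsto w (U : Filter (Fin s → ℕ)) atTop :=
    tendsto_atTop_mono' _ hcon (ht.const_mul_atTop hκ)
  let x : (Fin s → ℕ) → (Fin q → ℝ) := fun n => (w n)⁻¹ • ri q (fun i => (c n i : ℤ))
  have hwnn : ∀ n, 0 ≤ w n := fun n => Nat.cast_nonneg _
  have hcw : ∀ n i, (c n i : ℝ) ≤ w n := by
    intro n i
    simp only [w]
    exact_mod_cast Finset.single_le_sum (f := fun i => c n i) (fun i _ => Nat.zero_le _) (Finset.mem_univ i)
  have hxv : ∀ n i, x n i = (w n)⁻¹ * (c n i : ℝ) := by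
    intro n i; simp [x, ri_apply]
  have hxI : ∀ n, x n ∈ Set.Icc (0 : Fin q → ℝ) 1 := by
    intro n
    constructor
    · intro i
      rw [hxv]
      exact mul_nonneg (inv_nonneg.2 (hwnn n)) (Nat.cast_nonneg _)
    · intro i
      rw [hxv]
      exact (mul_le_mul_of_nonneg_left (hcw n i) (inv_nonneg.2 (hwnn n))).trans inv_mul_le_one
  have hxI' : ∀ᶠ n in (U : Filter (Fin s → ℕ)), x n ∈ Set.Icc (0 : Fin q → ℝ) 1 :=
    Eventually.of_forall hxI
  obtain ⟨cb, hcbI, hle⟩ := (isCompact_Icc (a := (0 : Fin q → ℝ)) (b := 1)).ultrafilter_le_nhds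
    (U.map x) (by rw [le_principal_iff]; exact hxI')
  have hx : Tendsto x (U : Filter (Fin s → ℕ)) (𝓝 cb) := hle
  have hxi : ∀ i, Tendsto (fun n => x n i) (U : Filter (Fin s → ℕ)) (𝓝 (cb i)) :=
    fun i => (tendsto_pi_nhds.1 hx) i
  have hwpos : ∀ᶠ n in (U : Filter (Fin s → ℕ)), 0 < w n := hwt.eventually_gt_atTop 0
  have hsum : ∑ i, cb i = 1 := by
    have h1 : Tendsto (fun n => ∑ i, x n i) (U : Filter (Fin s → ℕ)) (𝓝 (∑ i, cb i)) :=
      tendsto_finsetSum _ fun i _ => hxi i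
    have h2 : (fun n => ∑ i, x n i) =ᶠ[(U : Filter (Fin s → ℕ))] fun _ => (1 : ℝ) := by
      filter_upwards [hwpos] with n hn
      simp only [hxv]
      rw [← Finset.mul_sum]
      have : ∑ i, (c n i : ℝ) = w n := by simp [w]
      rw [this, inv_mul_cancel₀ hn.ne']
    exact tendsto_nhds_unique h1 (tendsto_const_nhds.congr' h2.symm)
  -- the matrix
  let L : (Fin q → ℤ) →ₗ[ℤ] (Fin p' → ℤ) := A' ∘ₗ (Fintype.linearCombination ℤ g)
  have hL : ∀ z, L z = A' (∑ i, z i • g i) := fun z => by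
    simp [L, Fintype.linearCombination_apply]
  obtain ⟨M, hM⟩ := realify L
  have hMc : Continuous M := M.continuous_of_finiteDimensional
  have hM0 : M cb = 0 := by
    have h1 : Tendsto (fun n => M (x n)) (U : Filter (Fin s → ℕ)) (𝓝 (M cb)) :=
      (hMc.tendsto cb).comp hx
    have h2 : Tendsto (fun n => M (x n)) (U : Filter (Fin s → ℕ)) (𝓝 0) := by
      have hbd : ∀ᶠ n in (U : Filter (Fin s → ℕ)), ‖M (x n)‖ ≤
          κ⁻¹ * ((t n)⁻¹ * ‖ri p' (A' (ci n))‖) + κ⁻¹ * ((t n)⁻¹ * ‖ri p' (A' (ci m))‖) := by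
        filter_upwards [hcon, hc, ht.eventually_gt_atTop 0] with n hn hn2 htn
        have e1 : M (x n) = (w n)⁻¹ • (ri p' (A' (ci n)) - ri p' (A' (ci m))) := by
          simp only [x]
          rw [map_smul, hM, hL]
          have h3 := Lam_ker hn2.1
          rw [map_sub, sub_eq_zero, map_sub] at h3
          have : ∑ i, ((c n i : ℕ) : ℤ) • g i = ∑ i, c n i • g i := by simp
          rw [this, ← h3, map_sub]
        rw [e1, norm_smul, ← mul_add, ← mul_add]
        have hkt : 0 < κ * t n := mul_pos hκ htn
        have h4 : ‖(w n)⁻¹‖ ≤ κ⁻¹ * (t n)⁻¹ := by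
          rw [norm_inv, Real.norm_eq_abs, abs_of_nonneg (hwnn n), ← mul_inv]
          exact inv_anti₀ hkt hn
        rw [← mul_assoc]
        exact mul_le_mul h4 (norm_sub_le _ _) (norm_nonneg _) (by positivity)
      apply squeeze_zero_norm' hbd
      have h5 := ((hlim.const_mul κ⁻¹).add
        (((tendsto_inv_atTop_zero.comp ht).mul_const ‖ri p' (A' (ci m))‖).const_mul κ⁻¹))
      simpa using h5
    exact tendsto_nhds_unique h1 h2
  -- Dirichlet
  obtain ⟨C, hC0, hC⟩ := (LinearMap.toContinuousLinearMap M).bound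
  have hCb : ∀ v, ‖M v‖ ≤ C * ‖v‖ := hC
  have hε : 0 < min 1 (1 / C) := lt_min one_pos (by positivity)
  obtain ⟨y, T, hT, hy⟩ := dirichlet cb hε (∑ i, |2 / cb i|)
  have hyi : ∀ i, |(y i : ℝ) - T * cb i| < 1 := by
    intro i
    have h1 := (norm_le_pi_norm (ri q y - T • cb) i).trans_lt (hy.trans_le (min_le_left _ _))
    simpa [ri_apply] using h1
  have hTnn : 0 ≤ T := le_trans (Finset.sum_nonneg fun i _ => abs_nonneg _) hT
  have hcbnn : ∀ i, 0 ≤ cb i := fun i => hcbI.1 i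
  have hynn : ∀ i, 0 ≤ y i := by
    intro i
    have h1 := (abs_lt.1 (hyi i)).1
    have h2 := mul_nonneg hTnn (hcbnn i)
    have h3 : (-1 : ℝ) < y i := by linarith
    have : (-1 : ℤ) < y i := by exact_mod_cast h3
    omega
  have hy0 : ∀ i, cb i = 0 → y i = 0 := by
    intro i hi
    have h1 := hyi i
    rw [hi, mul_zero, sub_zero] at h1
    have : |y i| < 1 := by exact_mod_cast h1
    rw [abs_lt] at this; omega
  obtain ⟨i0, hi0⟩ : ∃ i, 0 < y i := by
    have : ∃ i, 0 < cb i := by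
      by_contra hno
      push Not at hno
      have : ∑ i, cb i ≤ 0 := Finset.sum_nonpos fun i _ => hno i
      linarith
    obtain ⟨i, hi⟩ := this
    refine ⟨i, ?_⟩
    have h2 : |2 / cb i| ≤ T :=
      (Finset.single_le_sum (f := fun i => |2 / cb i|) (fun i _ => abs_nonneg _)
        (Finset.mem_univ i)).trans hT
    rw [abs_of_pos (by positivity), div_le_iff₀ hi] at h2
    have h1 := (abs_lt.1 (hyi i)).1
    have : (0 : ℝ) < y i := by linarith
    exact_mod_cast this
  have hLy : L y = 0 := by
    have h1 : ‖M (ri q y)‖ < 1 := by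
      have e1 : M (ri q y) = M (ri q y - T • cb) := by
        rw [map_sub, map_smul, hM0, smul_zero, sub_zero]
      rw [e1]
      have h2 := hy.trans_le (min_le_right _ _)
      rw [lt_div_iff₀ hC0] at h2
      have := hCb (ri q y - T • cb)
      linarith
    rw [hM] at h1
    ext j
    have h2 := (norm_le_pi_norm (ri p' (L y)) j).trans_lt h1
    rw [ri_apply, Real.norm_eq_abs] at h2
    have : |L y j| < 1 := by exact_mod_cast h2
    rw [abs_lt] at this
    simp only [Pi.zero_apply]
    omega
  let y' : Fin q → ℕ := fun i => (y i).toNat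
  have hy' : ∀ i, (y' i : ℤ) = y i := fun i => Int.toNat_of_nonneg (hynn i)
  have hmemD : ∑ i, y' i • g i ∈ D := Submodule.sum_mem _ fun i _ => D.smul_mem _ (hg i)
  have hmem : ∑ i, y' i • g i ∈ Lam D A' := by
    apply Lam_of hmemD
    rw [hL] at hLy
    rw [← hLy]
    congr 1
    refine Finset.sum_congr rfl fun i _ => ?_
    rw [← hy' i, natCast_zsmul]
  have hbig : ∀ᶠ n in (U : Filter (Fin s → ℕ)), ∀ i, y' i ≤ c n i := by
    rw [Filter.eventually_all]
    intro i
    rcases (hcbnn i).lt_or_eq with hi | hi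
    · have h1 : Tendsto (fun n => w n * x n i) (U : Filter (Fin s → ℕ)) atTop :=
        hwt.atTop_mul_pos hi (hxi i)
      filter_upwards [h1.eventually_ge_atTop (y' i : ℝ), hwpos] with n hn hn2
      rw [hxv, mul_inv_cancel_left₀ hn2.ne'] at hn
      exact_mod_cast hn
    · refine Eventually.of_forall fun n => ?_
      have : y' i = 0 := by simp [y', hy0 i hi.symm]
      omega
  obtain ⟨n, hn1, hn2⟩ := (hbig.and hc).exists
  have h1 := hn2.2 (fun i => c n i - y' i) (by
    have e1 : ∑ i, c n i • g i = ∑ i, (c n i - y' i) • g i + ∑ i, y' i • g i := by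
      rw [← Finset.sum_add_distrib]
      refine Finset.sum_congr rfl fun i _ => ?_
      rw [← add_smul, Nat.sub_add_cancel (hn1 i)]
    have e2 : ci n - ci m - ∑ i, (c n i - y' i) • g i =
        (ci n - ci m - ∑ i, c n i • g i) + ∑ i, y' i • g i := by rw [e1]; abel
    rw [e2]
    exact add_mem hn2.1 hmem)
  have h2 : ∑ i, (c n i - y' i) < ∑ i, c n i := by
    apply Finset.sum_lt_sum
    · intro i _; omega
    · refine ⟨i0, Finset.mem_univ _, ?_⟩
      have := hy' i0
      have := hn1 i0
      omega
  omega


theorem finite_reps {s p p' : ℕ} {D : Submodule ℕ (Fin s → ℤ)} {A : (Fin s → ℤ) →ₗ[ℤ] (Fin p → ℤ)}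
    {A' : (Fin s → ℤ) →ₗ[ℤ] (Fin p' → ℤ)}
    (h2 : ∀ x, A x = 0 → ∃ e : ℕ, 0 < e ∧ (e : ℤ) • x ∈ Lam D A) (R : ℝ) :
    ∃ W : Finset (Fin s → ℤ), (∀ a ∈ W, a ∈ Lam D A') ∧
      ∀ x ∈ Lam D A', ‖ri p (A x)‖ ≤ R → ∃ a ∈ W, x - a ∈ Lam D A := by
  obtain ⟨e, he, hmem⟩ := unif_e h2
  have : NeZero e := ⟨he.ne'⟩
  let T : Set (Fin s → ℤ) := {x | x ∈ Lam D A' ∧ ‖ri p (A x)‖ ≤ R}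
  let φ : (Fin s → ℤ) → (Fin p → ℤ) × (Fin s → ZMod e) := fun x => (A x, fun j => ((x j : ℤ) : ZMod e))
  have hfin : (φ '' T).Finite := by
    apply ((ri_finite (p := p) R).prod (Set.finite_univ (α := Fin s → ZMod e))).subset
    rintro _ ⟨x, hx, rfl⟩
    exact ⟨hx.2, Set.mem_univ _⟩
  obtain ⟨W, hWT, hW⟩ := Set.exists_subset_bijOn T φ
  have hWfin : W.Finite := hW.finite_iff_finite.2 hfin
  refine ⟨hWfin.toFinset, ?_, ?_⟩
  · intro a ha
    exact (hWT (hWfin.mem_toFinset.1 ha)).1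
  · intro x hx hxR
    obtain ⟨a, ha, hax⟩ := hW.surjOn ⟨x, ⟨hx, hxR⟩, rfl⟩
    refine ⟨a, hWfin.mem_toFinset.2 ha, ?_⟩
    apply hmem
    · rw [map_sub, sub_eq_zero]
      exact (congrArg Prod.fst hax).symm
    · exact Dv_of_zmod (congrArg Prod.snd hax).symm

theorem arith1 {x C δ t : ℝ} (hC : 0 ≤ C) (hδ : 0 < δ) (ht : 0 < t)
    (h : x < δ / (4 * (C + 1)) * t) : x * C ≤ δ / 4 * t := by
  have h1 : x * C ≤ δ / (4 * (C + 1)) * t * C := mul_le_mul_of_nonneg_right h.le hC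
  have h2 : δ / (4 * (C + 1)) * t * C ≤ δ / (4 * (C + 1)) * t * (C + 1) :=
    mul_le_mul_of_nonneg_left (by linarith) (by positivity)
  have h3 : δ / (4 * (C + 1)) * t * (C + 1) = δ / 4 * t := by field_simp
  linarith

set_option maxHeartbeats 1000000 in
theorem h3new {s p p' : ℕ} {D : Submodule ℕ (Fin s → ℤ)} (U : Ultrafilter (Fin s → ℕ))
    {A : (Fin s → ℤ) →ₗ[ℤ] (Fin p → ℤ)} {B : (Fin p → ℤ) →ₗ[ℤ] (Fin p' → ℤ)}
    (BR : (Fin p → ℝ) →ₗ[ℝ] (Fin p' → ℝ)) (hBR : ∀ x, BR (ri p x) = ri p' (B x))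
    {S : Submodule ℝ (Fin p → ℝ)} {θ : Fin p → ℝ} (hBθ : BR θ = 0)
    (hB : ∀ x, B x = 0 ↔ ri p x ∈ S)
    (ht : Tendsto (fun n => ‖ri p (A (ci n))‖) (U : Filter (Fin s → ℕ)) atTop)
    (hθ : Tendsto (fun n => (‖ri p (A (ci n))‖)⁻¹ • ri p (A (ci n))) (U : Filter (Fin s → ℕ)) (𝓝 θ))
    (hc : ConeP D A S θ)
    (h2 : ∀ x, A x = 0 → ∃ e : ℕ, 0 < e ∧ (e : ℤ) • x ∈ Lam D A)
    (m : Fin s → ℕ)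
    (h3 : ∀ G : Set (Fin s → ℤ), G.Finite → G ⊆ D →
      ∀ᶠ n in (U : Filter (Fin s → ℕ)), ¬ ∃ g ∈ Submodule.span ℕ G, ci n - ci m - g ∈ Lam D A)
    (G : Set (Fin s → ℤ)) (hG : G.Finite) (hGD : G ⊆ D) :
    ∀ᶠ n in (U : Filter (Fin s → ℕ)), ¬ ∃ g ∈ Submodule.span ℕ G, ci n - ci m - g ∈ Lam D (B ∘ₗ A) := by
  by_contra hcon
  rw [← Ultrafilter.eventually_not] at hcon
  obtain ⟨q, g, hg⟩ : ∃ (q : ℕ) (g : Fin q → Fin s → ℤ), Set.range g = G := by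
    obtain ⟨q, g, -, hg⟩ := hG.fin_param
    exact ⟨q, g, hg⟩
  subst hg
  have hgD : ∀ i, g i ∈ D := fun i => hGD ⟨i, rfl⟩
  -- minimal coefficients
  have hmin : ∀ n, ∃ c : Fin q → ℕ, (∃ g' ∈ Submodule.span ℕ (Set.range g),
      ci n - ci m - g' ∈ Lam D (B ∘ₗ A)) → (ci n - ci m - ∑ i, c i • g i ∈ Lam D (B ∘ₗ A)) ∧
      ∀ c' : Fin q → ℕ, ci n - ci m - ∑ i, c' i • g i ∈ Lam D (B ∘ₗ A) → ∑ i, c i ≤ ∑ i, c' i := by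
    intro n
    by_cases hn : ∃ g' ∈ Submodule.span ℕ (Set.range g), ci n - ci m - g' ∈ Lam D (B ∘ₗ A)
    · let P : Set (Fin q → ℕ) := {c | ci n - ci m - ∑ i, c i • g i ∈ Lam D (B ∘ₗ A)}
      have hP : P.Nonempty := by
        obtain ⟨g', hg', hmem⟩ := hn
        obtain ⟨c, rfl⟩ := (Submodule.mem_span_range_iff_exists_fun ℕ).1 hg'
        exact ⟨c, hmem⟩
      refine ⟨Function.argminOn (fun c : Fin q → ℕ => ∑ i, c i) P hP, fun _ => ⟨?_, ?_⟩⟩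
      · exact Function.argminOn_mem (fun c : Fin q → ℕ => ∑ i, c i) P hP
      · intro c' hc'
        exact Function.argminOn_le (fun c : Fin q → ℕ => ∑ i, c i) P hc'
    · exact ⟨0, fun h => absurd h hn⟩
  choose c hc1 using hmin
  have hc2 : ∀ᶠ n in (U : Filter (Fin s → ℕ)), (ci n - ci m - ∑ i, c n i • g i ∈ Lam D (B ∘ₗ A)) ∧
      ∀ c' : Fin q → ℕ, ci n - ci m - ∑ i, c' i • g i ∈ Lam D (B ∘ₗ A) → ∑ i, c n i ≤ ∑ i, c' i := by
    filter_upwards [hcon] with n hn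
    exact hc1 n (not_not.1 hn)
  set t : (Fin s → ℕ) → ℝ := fun n => ‖ri p (A (ci n))‖ with htdef
  have hsmall := h3a U (B ∘ₗ A) t ht (by
    have h5 : Tendsto (fun n => ‖BR ((‖ri p (A (ci n))‖)⁻¹ • ri p (A (ci n)))‖)
        (U : Filter (Fin s → ℕ)) (𝓝 ‖BR θ‖) :=
      ((BR.continuous_of_finiteDimensional.tendsto θ).comp hθ).norm
    rw [hBθ, norm_zero] at h5
    refine h5.congr fun n => ?_
    rw [map_smul, norm_smul, norm_inv, norm_norm, hBR]
    rfl) m g hgD c hc2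
  obtain ⟨F, hF, δ, hδ, hcone⟩ := hc
  -- representatives
  obtain ⟨W, hWmem, hW⟩ := finite_reps (A' := B ∘ₗ A) h2 (∑ f ∈ F, ‖ri p (A f)‖)
  have hd : ∀ a, ∃ u v, a ∈ W → u ∈ D ∧ (B ∘ₗ A) u = 0 ∧ v ∈ D ∧ (B ∘ₗ A) v = 0 ∧ a = u - v := by
    intro a
    by_cases ha : a ∈ W
    · obtain ⟨u, v, h⟩ := Lam_diff (hWmem a ha)
      exact ⟨u, v, fun _ => h⟩
    · exact ⟨0, 0, fun h => absurd h ha⟩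
  choose u v huv using hd
  let fs : Fin s → ℤ := ∑ a ∈ W, v a
  have hfsL : fs ∈ Lam D (B ∘ₗ A) :=
    Submodule.sum_mem _ fun a ha => Lam_of (huv a ha).2.2.1 (huv a ha).2.2.2.1
  -- convergence
  let lam : (Fin s → ℕ) → (Fin s → ℤ) := fun n => ci n - ci m - ∑ i, c n i • g i
  have hconv : ∀ᶠ n in (U : Filter (Fin s → ℕ)), ‖(t n)⁻¹ • ri p (A (lam n - fs)) - θ‖ < δ := by
    set Cg : ℝ := ∑ i, ‖ri p (A (g i))‖ with hCg
    have hCg0 : 0 ≤ Cg := Finset.sum_nonneg fun i _ => norm_nonneg _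
    have hk : 0 < δ / (4 * (Cg + 1)) := by positivity
    have hc3 := ht.eventually_gt_atTop (4 * ‖ri p (A (ci m + fs))‖ / δ)
    have hc4 : ∀ᶠ n in (U : Filter (Fin s → ℕ)), ‖(t n)⁻¹ • ri p (A (ci n)) - θ‖ < δ / 4 := by
      have := hθ.eventually (Metric.ball_mem_nhds θ (show 0 < δ / 4 by positivity))
      filter_upwards [this] with n hn
      rw [← dist_eq_norm]
      exact hn
    filter_upwards [hsmall _ hk, hc3, hc4, ht.eventually_gt_atTop 0] with n hn1 hn2 hn3 hn4
    have htn : 0 < t n := hn4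
    have e1 : (t n)⁻¹ • ri p (A (lam n - fs)) - θ = ((t n)⁻¹ • ri p (A (ci n)) - θ) -
        (t n)⁻¹ • (ri p (A (ci m + fs)) + ri p (A (∑ i, c n i • g i))) := by
      have : lam n - fs = ci n - (ci m + fs) - ∑ i, c n i • g i := by simp only [lam]; abel
      rw [this, map_sub, map_sub, map_sub, map_sub, smul_sub, smul_sub, smul_add]
      abel
    have e2 : ‖ri p (A (∑ i, c n i • g i))‖ ≤ ((∑ i, c n i : ℕ) : ℝ) * Cg := by
      rw [map_sum, map_sum]
      refine (norm_sum_le _ _).trans ?_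
      rw [hCg, Finset.mul_sum]
      refine Finset.sum_le_sum fun i _ => ?_
      have e3 : ri p (A (c n i • g i)) = (c n i : ℝ) • ri p (A (g i)) := by
        rw [map_nsmul, map_nsmul]; ext j; simp
      rw [e3, norm_smul]
      apply mul_le_mul_of_nonneg_right _ (norm_nonneg _)
      simp only [Real.norm_natCast]
      exact_mod_cast Finset.single_le_sum (f := fun i => c n i) (fun i _ => Nat.zero_le _)
        (Finset.mem_univ i)
    rw [e1]
    refine (norm_sub_le _ _).trans_lt ?_
    rw [norm_smul, norm_inv, Real.norm_eq_abs, abs_of_pos htn]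
    have e4 : ‖ri p (A (ci m + fs))‖ < δ / 4 * t n := by
      rw [div_lt_iff₀ hδ] at hn2
      change _ < t n * δ at hn2
      linarith
    have e5 : ((∑ i, c n i : ℕ) : ℝ) * Cg ≤ δ / 4 * t n := arith1 hCg0 hδ htn hn1
    have e6 : (t n)⁻¹ * ‖ri p (A (ci m + fs)) + ri p (A (∑ i, c n i • g i))‖ ≤ δ / 2 := by
      rw [inv_mul_le_iff₀ htn]
      have := norm_add_le (ri p (A (ci m + fs))) (ri p (A (∑ i, c n i • g i)))
      linarith
    linarith
  -- conclusion
  classical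
  have hfinal := h3 (Set.range g ∪ ↑F ∪ ↑(W.image u) ∪ ↑(W.image v))
    (((hG.union F.finite_toSet).union (W.image u).finite_toSet).union (W.image v).finite_toSet) (by
      rintro x (((hx | hx) | hx) | hx)
      · exact hGD hx
      · exact (hF x hx).1
      · obtain ⟨a, ha, rfl⟩ := Finset.mem_image.1 hx
        exact (huv a ha).1
      · obtain ⟨a, ha, rfl⟩ := Finset.mem_image.1 hx
        exact (huv a ha).2.2.1)
  obtain ⟨n, ⟨⟨hn1, hn2⟩, hn3⟩, hn4⟩ := (((hconv.and hc2).and hfinal).and (ht.eventually_gt_atTop 0)).exists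
  have htn : 0 < t n := hn4
  apply hn3
  have hlamL : lam n - fs ∈ Lam D (B ∘ₗ A) := sub_mem hn2.1 hfsL
  have hlamS : ri p (A (lam n - fs)) ∈ S := (hB _).1 (Lam_ker (A := B ∘ₗ A) hlamL)
  obtain ⟨r, hr0, hr⟩ := hcone _ (S.smul_mem (t n)⁻¹ hlamS) hn1
  have hr' : ri p (A (lam n - fs)) = ∑ f ∈ F, (t n * r f) • ri p (A f) := by
    have : ri p (A (lam n - fs)) = t n • ((t n)⁻¹ • ri p (A (lam n - fs))) := by
      rw [smul_smul, mul_inv_cancel₀ htn.ne', one_smul]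
    rw [this, hr, Finset.smul_sum]
    exact Finset.sum_congr rfl fun f _ => by rw [mul_smul]
  let k : (Fin s → ℤ) → ℕ := fun f => ⌊t n * r f⌋₊
  have hk : ∀ f, (k f : ℤ) = ⌊t n * r f⌋ := fun f =>
    Int.natCast_floor_eq_floor (mul_nonneg htn.le (hr0 f))
  have hkL : ∑ f ∈ F, k f • f ∈ Lam D (B ∘ₗ A) :=
    Submodule.sum_mem _ fun f hf => nsmul_mem (Lam_of (hF f hf).1 ((hB _).2 (hF f hf).2)) _
  have hbd : ‖ri p (A (lam n - fs - ∑ f ∈ F, k f • f))‖ ≤ ∑ f ∈ F, ‖ri p (A f)‖ := by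
    have : ri p (A (lam n - fs - ∑ f ∈ F, k f • f)) =
        ∑ f ∈ F, Int.fract (t n * r f) • ri p (A f) := by
      rw [map_sub, map_sub, hr', ← ri_sum, map_sum]
      congr 2
      refine Finset.sum_congr rfl fun f _ => ?_
      rw [map_nsmul, ← hk, natCast_zsmul]
    rw [this]
    exact fract_bound _ _ _
  obtain ⟨a, ha, hax⟩ := hW _ (sub_mem hlamL hkL) hbd
  refine ⟨∑ i, c n i • g i + ∑ f ∈ F, k f • f + u a + ∑ b ∈ W.erase a, v b, ?_, ?_⟩
  · refine add_mem (add_mem (add_mem ?_ ?_) ?_) ?_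
    · exact Submodule.sum_mem _ fun i _ => Submodule.smul_mem _ _ (Submodule.subset_span
        (Or.inl (Or.inl (Or.inl ⟨i, rfl⟩))))
    · exact Submodule.sum_mem _ fun f hf => Submodule.smul_mem _ _ (Submodule.subset_span
        (Or.inl (Or.inl (Or.inr hf))))
    · exact Submodule.subset_span (Or.inl (Or.inr (Finset.mem_image_of_mem u ha)))
    · exact Submodule.sum_mem _ fun b hb => Submodule.subset_span
        (Or.inr (Finset.mem_image_of_mem v (Finset.mem_of_mem_erase hb)))
  · convert hax using 1
    have e1 : fs = v a + ∑ b ∈ W.erase a, v b := (Finset.add_sum_erase W v ha).symm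
    have e2 : u a = a + v a := eq_add_of_sub_eq (huv a ha).2.2.2.2.symm
    rw [e1, e2]
    simp only [lam]
    abel

theorem step_false {s : ℕ} {D : (Fin s → ℕ) → Submodule ℕ (Fin s → ℤ)}
    {U : Ultrafilter (Fin s → ℕ)}
    (hw : ∀ f : ℕ → (Fin s → ℕ), ∃ j k, j < k ∧ ci (f k) - ci (f j) ∈ D (f j))
    (p : ℕ) : ∀ (A : (Fin s → ℤ) →ₗ[ℤ] (Fin p → ℤ)) (Good : (Fin s → ℕ) → Prop),
    St D U p A Good → False := by
  induction p using Nat.strong_induction_on with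
  | _ p ih =>
  intro A Good st
  by_cases hbdd : ∃ R : ℝ, ∀ᶠ n in (U : Filter (Fin s → ℕ)), ‖ri p (A (ci n))‖ ≤ R
  · obtain ⟨R, hR⟩ := hbdd
    exact bounded_case hw st R hR
  have ht : Tendsto (fun n => ‖ri p (A (ci n))‖) (U : Filter (Fin s → ℕ)) atTop := by
    rw [tendsto_atTop]
    intro R
    by_contra hR
    rw [← Ultrafilter.eventually_not] at hR
    exact hbdd ⟨R, hR.mono fun n hn => (not_le.1 hn).le⟩
  obtain ⟨θ, hθ1, hθ⟩ := exists_theta U A ht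
  obtain ⟨S, ε0, h0, hS⟩ := exists_S θ
  have hθS := theta_mem_S θ S ε0 h0 hS
  have hθ0 : θ ≠ 0 := by
    intro h; rw [h, norm_zero] at hθ1; exact zero_ne_one hθ1
  obtain ⟨p', B, BR, σ, hp', hBsurj, hB, hBR, hBS, hσ⟩ := exists_B S _ (hS ε0 h0 le_rfl) θ hθS hθ0
  have hpos : ∀ (j : Fin s) (h : (Fin p → ℝ) →ₗ[ℝ] ℝ),
      (∀ x : Fin s → ℤ, (x j : ℝ) = h (ri p (A x))) → 0 ≤ h θ := by
    intro j h hh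
    have h1 : Tendsto (fun n => h ((‖ri p (A (ci n))‖)⁻¹ • ri p (A (ci n))))
        (U : Filter (Fin s → ℕ)) (𝓝 (h θ)) :=
      ((LinearMap.continuous_of_finiteDimensional h).tendsto θ).comp hθ
    refine ge_of_tendsto h1 (Eventually.of_forall fun n => ?_)
    rw [map_smul, ← hh, smul_eq_mul]
    have : (0 : ℝ) ≤ (ci n j : ℝ) := by simp [ci]
    positivity
  apply ih p' hp' (B ∘ₗ A) (fun m => Good m ∧ ConeP (D m) A S θ)
  have hh2 : ∀ m, Good m ∧ ConeP (D m) A S θ → ∀ x, (B ∘ₗ A) x = 0 →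
      ∃ e : ℕ, 0 < e ∧ (e : ℤ) • x ∈ Lam (D m) (B ∘ₗ A) :=
    fun m hm x hx => h2new hθS hB hm.2 (st.h2 m hm.1) x hx
  refine ⟨hBsurj.comp st.surj, ?_, hh2, ?_, ?_⟩
  · intro n e he
    obtain ⟨m, hm, hm2⟩ := residue D hw (B ∘ₗ A) (pure n)
      (fun m => (Good m ∧ ConeP (D m) A S θ) ∧ Dv e (ci n - ci m)) (by
        intro e' he'
        obtain ⟨m, h1, h2, h3, h4⟩ := lemmaC hw st θ S ε0 h0 hS hpos n (e * e') (Nat.mul_pos he he')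
        refine ⟨m, ⟨⟨h1, h2⟩, h3.of_dvd (Dvd.intro _ rfl)⟩, ?_⟩
        rw [eventually_pure]
        exact ⟨h3.of_dvd (Dvd.intro_left _ rfl), (hB _).2 h4⟩)
      (fun m hm => unif_e (hh2 m hm.1))
    rw [eventually_pure] at hm2
    exact ⟨m, hm.1, hm2, hm.2⟩
  · intro m hm G hG hGD
    exact h3new U BR hBR (hBS θ hθS) hB ht hθ hm.2 (st.h2 m hm.1) m (st.h3 m hm.1) G hG hGD
  · exact h4new h0 hS st.surj hB σ hσ hpos st.h4

theorem coverT {s : ℕ} (D : (Fin s → ℕ) → Submodule ℕ (Fin s → ℤ))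
    (hw : ∀ f : ℕ → (Fin s → ℕ), ∃ j k, j < k ∧ ci (f k) - ci (f j) ∈ D (f j)) :
    ∃ C : Finset ((Fin s → ℕ) × Finset (Fin s → ℤ)), (∀ c ∈ C, (c.2 : Set (Fin s → ℤ)) ⊆ D c.1) ∧
      ∀ n, ∃ c ∈ C, ci n - ci c.1 ∈ Submodule.span ℕ (c.2 : Set (Fin s → ℤ)) := by
  classical
  by_contra hcon
  push Not at hcon
  let bad : (Fin s → ℕ) × Finset (Fin s → ℤ) → Set (Fin s → ℕ) :=
    fun c => {n | ci n - ci c.1 ∉ Submodule.span ℕ (c.2 : Set (Fin s → ℤ))}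
  obtain ⟨U, hU⟩ := Ultrafilter.exists_ultrafilter_of_finite_inter_nonempty
    (bad '' {c | (c.2 : Set (Fin s → ℤ)) ⊆ D c.1}) (by
      intro T hT
      obtain ⟨C, hC, hCT⟩ := Finset.subset_set_image_iff.1 hT
      obtain ⟨n, hn⟩ := hcon C (fun c hc => hC hc)
      refine ⟨n, ?_⟩
      rintro b hb
      rw [← hCT] at hb
      obtain ⟨c, hc, rfl⟩ := Finset.mem_image.1 (Finset.mem_coe.1 hb)
      exact hn c hc)
  apply step_false (U := U) hw s LinearMap.id (fun _ => True)
  refine ⟨fun x => ⟨x, rfl⟩, ?_, ?_, ?_, ?_⟩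
  · intro n e he
    refine ⟨n, trivial, ?_, ⟨0, ?_⟩⟩
    · rw [sub_self]; exact Submodule.zero_mem _
    · simp
  · intro m _ x hx
    have hx : x = 0 := hx
    exact ⟨1, one_pos, by rw [hx, smul_zero]; exact Submodule.zero_mem _⟩
  · intro m _ G hG hGD
    have := hU ⟨(m, hG.toFinset), by simpa using hGD, rfl⟩
    have h1 : ∀ᶠ n in (U : Filter (Fin s → ℕ)), ci n - ci m ∉ Submodule.span ℕ G := by
      have h2 : {n | ci n - ci m ∉ Submodule.span ℕ G} ∈ U := by simpa [bad] using this
      exact h2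
    filter_upwards [h1] with n hn
    rintro ⟨g, hg, hmem⟩
    have h2 : ci n - ci m - g = 0 := Lam_ker hmem
    apply hn
    rw [sub_eq_zero.1 h2]
    exact hg
  · refine ⟨0, rfl, fun j => Or.inr ⟨LinearMap.proj j, fun x => rfl⟩⟩


def PFlat {d : ℕ} (V : PVAS d) (ws : List (List V.E)) (x y : NVec d) : Prop :=
  compList (ws.map fun w => Relation.ReflTransGen (V.StepWord w)) x y

theorem PFlat.refl {d : ℕ} {V : PVAS d} (ws : List (List V.E)) (x : NVec d) : PFlat V ws x x := by
  induction ws with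
  | nil => exact rfl
  | cons w ws ih => exact ⟨x, Relation.ReflTransGen.refl, ih⟩

theorem PFlat.append {d : ℕ} {V : PVAS d} {ws ws' : List (List V.E)} {x y z : NVec d}
    (h : PFlat V ws x y) (h' : PFlat V ws' y z) : PFlat V (ws ++ ws') x z := by
  induction ws generalizing x with
  | nil =>
    have : x = y := h
    subst this
    exact h'
  | cons w ws ih =>
    obtain ⟨a, ha, hb⟩ := h
    exact ⟨a, ha, ih hb⟩

theorem stepWord_reach {d : ℕ} {V : PVAS d} {w : List V.E} {x y : NVec d}
    (h : V.StepWord w x y) : V.Reach x y := by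
  induction w generalizing x with
  | nil =>
    have : x = y := h
    subst this
    exact Relation.ReflTransGen.refl
  | cons e w ih =>
    obtain ⟨a, ha, hb⟩ := h
    exact Relation.ReflTransGen.head ⟨e, ha⟩ (ih hb)

theorem PFlat.sound {d : ℕ} {V : PVAS d} {ws : List (List V.E)} {x y : NVec d}
    (h : PFlat V ws x y) : V.Reach x y := by
  induction ws generalizing x with
  | nil =>
    have : x = y := h
    subst this
    exact Relation.ReflTransGen.refl
  | cons w ws ih =>
    obtain ⟨a, ha, hb⟩ := h
    refine Relation.ReflTransGen.trans ?_ (ih hb)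
    clear hb ih
    induction ha with
    | refl => exact Relation.ReflTransGen.refl
    | tail _ h2 ih2 => exact Relation.ReflTransGen.trans ih2 (stepWord_reach h2)

def Flatp {d : ℕ} (V : PVAS d) (x y : NVec d) (D : Set (NVec d × NVec d)) : Prop :=
  ∀ (r : ℕ) (p : Fin r → NVec d × NVec d), (∀ j, p j ∈ D) →
    ∃ ws : List (List V.E), ∀ n : Fin r → ℕ,
      PFlat V ws (x + ∑ j, n j • (p j).1) (y + ∑ j, n j • (p j).2)

def rcomp {d : ℕ} (A B : Set (NVec d × NVec d)) : Set (NVec d × NVec d) :=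
  {p | ∃ m, (p.1, m) ∈ A ∧ (m, p.2) ∈ B}

theorem Flatp.comp {d : ℕ} {V : PVAS d} {x y z : NVec d} {A B : Set (NVec d × NVec d)}
    (hA : Flatp V x y A) (hB : Flatp V y z B) : Flatp V x z (rcomp A B) := by
  intro r p hp
  choose m h1 h2 using hp
  obtain ⟨ws, hws⟩ := hA r (fun j => ((p j).1, m j)) h1
  obtain ⟨ws', hws'⟩ := hB r (fun j => (m j, (p j).2)) h2
  exact ⟨ws ++ ws', fun n => (hws n).append (hws' n)⟩

def Zk (d k : ℕ) (x : NVec d) : Prop := ∀ j : Fin d, (j : ℕ) < k → x j = 0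

theorem Zk.add {d k : ℕ} {x y : NVec d} (hx : Zk d k x) (hy : Zk d k y) : Zk d k (x + y) := by
  intro j hj
  simp [hx j hj, hy j hj]

theorem Zk.left {d k : ℕ} {x y : NVec d} (h : Zk d k (x + y)) : Zk d k x := by
  intro j hj
  have := h j hj
  simp at this
  exact this.1

theorem Zk.right {d k : ℕ} {x y : NVec d} (h : Zk d k (x + y)) : Zk d k y := by
  intro j hj
  have := h j hj
  simp at this
  exact this.2

theorem Zk.nsmul {d k : ℕ} {x : NVec d} (hx : Zk d k x) (n : ℕ) : Zk d k (n • x) := by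
  intro j hj
  simp [hx j hj]

theorem Zk.sum {d k r : ℕ} {x : Fin r → NVec d} (hx : ∀ i, Zk d k (x i)) :
    Zk d k (∑ i, x i) := by
  intro j hj
  simp [hx _ j hj]

theorem stepE_shift {d k : ℕ} {V : PVAS d} {e : V.E} {x y z : NVec d} (h : V.StepE e x y)
    (he : V.test e ≤ k) (hz : Zk d k z) : V.StepE e (x + z) (y + z) := by
  refine ⟨fun j hj => ?_, fun i => ?_⟩
  · simp [h.1 j hj, hz j (lt_of_lt_of_le hj he)]
  · have := h.2 i
    simp only [Pi.add_apply]
    push_cast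
    linarith

theorem stepWord_shift {d k : ℕ} {V : PVAS d} {w : List V.E} {x y z : NVec d}
    (h : V.StepWord w x y) (he : ∀ e ∈ w, V.test e ≤ k) (hz : Zk d k z) :
    V.StepWord w (x + z) (y + z) := by
  induction w generalizing x with
  | nil =>
    have : x = y := h
    subst this
    exact rfl
  | cons e w ih =>
    obtain ⟨a, ha, hb⟩ := h
    exact ⟨a + z, stepE_shift ha (he e (by simp)) hz, ih hb (fun e' h' => he e' (by simp [h']))⟩

def ReachK {d : ℕ} (V : PVAS d) (k : ℕ) : NVec d → NVec d → Prop :=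
  Relation.ReflTransGen (fun x y => ∃ e, V.test e < k ∧ V.StepE e x y)

theorem ReachK.mono {d k : ℕ} {V : PVAS d} {x y : NVec d} (h : ReachK V k x y) :
    ReachK V (k + 1) x y :=
  Relation.ReflTransGen.mono (r := fun x y => ∃ e, V.test e < k ∧ V.StepE e x y)
    (fun _ _ ⟨e, h1, h2⟩ => ⟨e, by omega, h2⟩) _ _ h

theorem ReachK.word {d k : ℕ} {V : PVAS d} {x y : NVec d} (h : ReachK V (k + 1) x y) :
    ∃ w : List V.E, (∀ e ∈ w, V.test e ≤ k) ∧ V.StepWord w x y := by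
  induction h using Relation.ReflTransGen.head_induction_on with
  | refl => exact ⟨[], by simp, rfl⟩
  | head h1 _ ih =>
    obtain ⟨e, he, hs⟩ := h1
    obtain ⟨w, hw, hs'⟩ := ih
    refine ⟨e :: w, ?_, ⟨_, hs, hs'⟩⟩
    intro e' h'
    rcases List.mem_cons.1 h' with rfl | h'
    · omega
    · exact hw _ h'

def Ins {d : ℕ} (V : PVAS d) (k : ℕ) (c : NVec d) : Set (NVec d × NVec d) :=
  {p | Zk d k p.1 ∧ Zk d k p.2 ∧ ReachK V (k + 1) (c + p.1) (c + p.2)}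

theorem iter_word {d k : ℕ} {V : PVAS d} {w : List V.E} {c u v : NVec d}
    (hw : ∀ e ∈ w, V.test e ≤ k) (hs : V.StepWord w (c + u) (c + v)) (hu : Zk d k u)
    (hv : Zk d k v) (n : ℕ) : ∀ z, Zk d k z →
    Relation.ReflTransGen (V.StepWord w) (c + n • u + z) (c + n • v + z) := by
  induction n with
  | zero =>
    intro z _
    simp only [zero_smul]
    exact Relation.ReflTransGen.refl
  | succ n ih =>
    intro z hz
    have h1 := stepWord_shift hs hw ((hu.nsmul n).add hz)
    have h2 := ih (v + z) (hv.add hz)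
    refine Relation.ReflTransGen.head (b := c + v + (n • u + z)) ?_ ?_
    · convert h1 using 1
      rw [succ_nsmul]; abel
    · convert h2 using 1
      · abel
      · rw [succ_nsmul]; abel

theorem ins_flat_aux {d k : ℕ} {V : PVAS d} {c : NVec d} (r : ℕ) :
    ∀ (p : Fin r → NVec d × NVec d), (∀ j, p j ∈ Ins V k c) →
    ∃ ws : List (List V.E), ∀ n : Fin r → ℕ, ∀ z, Zk d k z →
      PFlat V ws (c + ∑ j, n j • (p j).1 + z) (c + ∑ j, n j • (p j).2 + z) := by
  induction r with
  | zero =>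
    intro p _
    exact ⟨[], fun n z _ => by simpa using PFlat.refl _ _⟩
  | succ r ih =>
    intro p hp
    obtain ⟨ws, hws⟩ := ih (fun j => p j.succ) (fun j => hp _)
    obtain ⟨hu, hv, hr⟩ := hp 0
    obtain ⟨w, hw, hs⟩ := hr.word
    refine ⟨w :: ws, fun n z hz => ?_⟩
    have hS : Zk d k (∑ j : Fin r, n j.succ • (p j.succ).1) :=
      Zk.sum fun i => (hp i.succ).1.nsmul _
    refine ⟨c + n 0 • (p 0).2 + (∑ j : Fin r, n j.succ • (p j.succ).1 + z), ?_, ?_⟩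
    · have := iter_word hw hs hu hv (n 0) _ (hS.add hz)
      convert this using 1
      rw [Fin.sum_univ_succ]; abel
    · have := hws (fun j => n j.succ) (n 0 • (p 0).2 + z) ((hv.nsmul _).add hz)
      unfold PFlat at this
      convert this using 1
      · abel
      · rw [Fin.sum_univ_succ]; abel

theorem ins_flat {d k : ℕ} {V : PVAS d} {c : NVec d} : Flatp V c c (Ins V k c) := by
  intro r p hp
  obtain ⟨ws, h⟩ := ins_flat_aux r p hp
  refine ⟨ws, fun n => ?_⟩
  simpa using h n 0 (fun j _ => rfl)

def Dz (d k : ℕ) : Set (NVec d × NVec d) := {p | p.1 = p.2 ∧ Zk d k p.1}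

theorem step_flat {d k : ℕ} {V : PVAS d} {e : V.E} {x y : NVec d} (h : V.StepE e x y)
    (he : V.test e = k) : Flatp V x y (Dz d k) := by
  intro r p hp
  refine ⟨[[e]], fun n => ⟨_, Relation.ReflTransGen.single ⟨_, ?_, rfl⟩, rfl⟩⟩
  have : ∑ j, n j • (p j).2 = ∑ j, n j • (p j).1 :=
    Finset.sum_congr rfl fun j _ => by rw [(hp j).1]
  rw [this]
  exact stepE_shift h he.le (Zk.sum fun i => (hp i).2.nsmul _)

structure Fam {d : ℕ} (V : PVAS d) (k : ℕ) where
  I : Type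
  src : I → NVec d
  tgt : I → NVec d
  le : I → I → Prop
  D : I → Set (NVec d × NVec d)
  rfl' : ∀ i, le i i
  trans' : ∀ i j l, le i j → le j l → le i l
  wqo : WellQuasiOrdered le
  sound : ∀ i, ReachK V k (src i) (tgt i)
  complete : ∀ x y, ReachK V k x y → ∃ i, src i = x ∧ tgt i = y
  mono : ∀ i i', le i i' → ∃ u v, src i' = src i + u ∧ tgt i' = tgt i + v ∧ (u, v) ∈ D i
  flat : ∀ i, Flatp V (src i) (tgt i) (D i)

theorem fam_zero {d : ℕ} (V : PVAS d) : Nonempty (Fam V 0) := by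
  refine ⟨⟨NVec d, id, id, (· ≤ ·), fun _ => {p | p.1 = p.2}, fun _ => le_rfl,
    fun _ _ _ => le_trans, ?_, fun i => Relation.ReflTransGen.refl, ?_, ?_, ?_⟩⟩
  · exact wellQuasiOrdered_le
  · intro x y h
    induction h with
    | refl => exact ⟨x, rfl, rfl⟩
    | tail _ h2 _ =>
      obtain ⟨e, he, _⟩ := h2
      omega
  · intro i i' h
    obtain ⟨u, rfl⟩ := exists_add_of_le h
    exact ⟨u, u, rfl, rfl, rfl⟩
  · intro i r p hp
    refine ⟨[], fun n => ?_⟩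
    have : ∑ j, n j • (p j).2 = ∑ j, n j • (p j).1 :=
      Finset.sum_congr rfl fun j _ => by rw [show (p j).1 = (p j).2 from hp j]
    rw [this]
    exact rfl

section lev
variable {d k : ℕ} {V : PVAS d} (F : Fam V k)

def Mid : NVec d → List (V.E × F.I) → NVec d → Prop
  | c, [], c' => c = c'
  | c, (t, i) :: l, c' => V.StepE t c (F.src i) ∧ V.test t = k ∧ Mid (F.tgt i) l c'

def MidD : NVec d → List (V.E × F.I) → Set (NVec d × NVec d)
  | c, [] => Ins V k c
  | c, (_, i) :: l => rcomp (Ins V k c) (rcomp (Dz d k) (rcomp (F.D i) (MidD (F.tgt i) l)))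

def leP (a b : V.E × F.I) : Prop := a.1 = b.1 ∧ F.le a.2 b.2

variable {F}

theorem stepE_zk {e : V.E} {x y : NVec d} (h : V.StepE e x y) (he : V.test e = k) : Zk d k x := by
  subst he
  exact h.1

theorem Mid.zk {c a : NVec d} {l : List (V.E × F.I)} (h : Mid F c l a) (ha : Zk d k a) :
    Zk d k c := by
  cases l with
  | nil =>
    have : c = a := h
    subst this
    exact ha
  | cons p l => exact stepE_zk h.1 h.2.1

theorem Mid.reach {c a : NVec d} {l : List (V.E × F.I)} (h : Mid F c l a) :
    ReachK V (k + 1) c a := by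
  induction l generalizing c with
  | nil =>
    have : c = a := h
    subst this
    exact Relation.ReflTransGen.refl
  | cons p l ih =>
    obtain ⟨h1, h2, h3⟩ := h
    exact Relation.ReflTransGen.head ⟨p.1, by omega, h1⟩
      (Relation.ReflTransGen.trans (F.sound p.2).mono (ih h3))

theorem Mid.flat {c a : NVec d} {l : List (V.E × F.I)} (h : Mid F c l a) :
    Flatp V c a (MidD F c l) := by
  induction l generalizing c with
  | nil =>
    have : c = a := h
    subst this
    exact ins_flat
  | cons p l ih =>
    obtain ⟨h1, h2, h3⟩ := h
    exact ins_flat.comp ((step_flat h1 h2).comp ((F.flat _).comp (ih h3)))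

theorem Mid.snoc {c a : NVec d} {l : List (V.E × F.I)} (h : Mid F c l a) {t : V.E} {i : F.I}
    (ht : V.StepE t a (F.src i)) (hk : V.test t = k) : Mid F c (l ++ [(t, i)]) (F.tgt i) := by
  induction l generalizing c with
  | nil =>
    have : c = a := h
    subst this
    exact ⟨ht, hk, rfl⟩
  | cons p l ih =>
    obtain ⟨h1, h2, h3⟩ := h
    exact ⟨h1, h2, ih h3⟩

theorem stepE_back {e : V.E} {x y x' u : NVec d} (h : V.StepE e x y) (h' : V.StepE e x' (y + u)) :
    x' = x + u := by
  funext i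
  have h1 := h.2 i
  have h2 := h'.2 i
  simp only [Pi.add_apply] at h2 ⊢
  push_cast at h2
  omega

theorem Mid.main {l l' : List (V.E × F.I)} (hs : List.SublistForall₂ (leP F) l l') :
    ∀ {c c' a u v : NVec d}, Mid F c l a → Mid F c' l' (a + v) → Zk d k (a + v) →
      Zk d k (c + u) → ReachK V (k + 1) (c + u) c' → (u, v) ∈ MidD F c l := by
  induction hs with
  | nil =>
    intro c c' a u v h h' hz hu hr
    have : c = a := h
    subst this
    exact ⟨hu.right, hz.right, Relation.ReflTransGen.trans hr h'.reach⟩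
  | @cons p p' l l' hp _ ih =>
    intro c c' a u v h h' hz hu hr
    obtain ⟨t, i⟩ := p
    obtain ⟨t', i'⟩ := p'
    obtain ⟨h1, h2, h3⟩ := h
    obtain ⟨h1', h2', h3'⟩ := h'
    obtain ⟨rfl, hle⟩ := hp
    obtain ⟨m, q, hm, hq, hD⟩ := F.mono _ _ hle
    simp only at hm hq hD h1' h3'
    rw [hm] at h1'
    have e1 := stepE_back h1 h1'
    have z1 := stepE_zk h1' h2'
    rw [e1] at z1 hr
    rw [hq] at h3'
    exact ⟨m, ⟨hu.right, z1.right, hr⟩, m, ⟨rfl, z1.right⟩, q, hD,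
      ih h3 h3' hz (h3'.zk hz) Relation.ReflTransGen.refl⟩
  | @cons_right p l l' _ ih =>
    intro c c' a u v h h' hz hu hr
    obtain ⟨h1', h2', h3'⟩ := h'
    refine ih h h3' hz hu (Relation.ReflTransGen.trans hr ?_)
    exact Relation.ReflTransGen.head ⟨p.1, by omega, h1'⟩ (F.sound _).mono

variable (F)

abbrev Raw := F.I × List (V.E × F.I) × Option V.E × F.I

def Valid (R : Raw F) : Prop :=
  match R with
  | (i, l, none, j) => l = [] ∧ j = i
  | (i, l, some t, j) => ∃ c, Mid F (F.tgt i) l c ∧ V.StepE t c (F.src j) ∧ V.test t = k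

def RawD (R : Raw F) : Set (NVec d × NVec d) :=
  match R with
  | (i, _, none, _) => F.D i
  | (i, l, some _, j) => rcomp (F.D i) (rcomp (MidD F (F.tgt i) l) (rcomp (Dz d k) (F.D j)))

def leR (R S : Raw F) : Prop :=
  F.le R.1 S.1 ∧ List.SublistForall₂ (leP F) R.2.1 S.2.1 ∧ R.2.2.1 = S.2.2.1 ∧ F.le R.2.2.2 S.2.2.2

theorem pre_le : IsPreorder F.I F.le :=
  { refl := F.rfl', trans := F.trans' }

theorem pre_leP : IsPreorder (V.E × F.I) (leP F) :=
  { refl := fun _ => ⟨rfl, F.rfl' _⟩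
    trans := fun _ _ _ h h' => ⟨h.1.trans h'.1, F.trans' _ _ _ h.2 h'.2⟩ }

theorem wqo_leR : WellQuasiOrdered (leR F) := by
  have := pre_le F
  have := pre_leP F
  have : Finite V.E := @Finite.of_fintype _ V.fintypeE
  have hE : WellQuasiOrdered (fun a b : V.E => a = b) := Finite.wellQuasiOrdered _
  have hO : WellQuasiOrdered (fun a b : Option V.E => a = b) := Finite.wellQuasiOrdered _
  have hP : WellQuasiOrdered (leP F) := hE.prod F.wqo
  have hL : WellQuasiOrdered (List.SublistForall₂ (leP F)) := by
    have := Set.PartiallyWellOrderedOn.partiallyWellOrderedOn_sublistForall₂ (leP F)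
      (Set.partiallyWellOrderedOn_univ_iff.2 hP)
    intro f
    exact this.exists_lt (f := f) (fun n x _ => trivial)
  have : IsPreorder (List (V.E × F.I)) (List.SublistForall₂ (leP F)) := { }
  have hOp : IsPreorder (Option V.E) (fun a b => a = b) :=
    { refl := fun _ => rfl, trans := fun _ _ _ => Eq.trans }
  exact F.wqo.prod (hL.prod (hO.prod F.wqo))

theorem fam_succ {d k : ℕ} {V : PVAS d} (F : Fam V k) : Nonempty (Fam V (k + 1)) := by
  have := pre_le F
  have := pre_leP F
  refine ⟨⟨{R : Raw F // Valid F R}, fun R => F.src R.1.1, fun R => F.tgt R.1.2.2.2,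
    fun R S => leR F R.1 S.1, fun R => RawD F R.1, ?_, ?_, ?_, ?_, ?_, ?_, ?_⟩⟩
  · exact fun R => ⟨F.rfl' _, List.SublistForall₂.is_refl.refl _, rfl, F.rfl' _⟩
  · intro R S T h h'
    exact ⟨F.trans' _ _ _ h.1 h'.1, List.SublistForall₂.is_trans.trans _ _ _ h.2.1 h'.2.1,
      h.2.2.1.trans h'.2.2.1, F.trans' _ _ _ h.2.2.2 h'.2.2.2⟩
  · intro f
    exact wqo_leR F (fun n => (f n).1)
  · rintro ⟨⟨i, l, o, j⟩, h⟩
    cases o with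
    | none =>
      obtain ⟨rfl, rfl⟩ := h
      exact (F.sound _).mono
    | some t =>
      obtain ⟨c, h1, h2, h3⟩ := h
      exact Relation.ReflTransGen.trans (F.sound i).mono (Relation.ReflTransGen.trans h1.reach
        (Relation.ReflTransGen.head ⟨t, by omega, h2⟩ (F.sound j).mono))
  · intro x y h
    induction h with
    | refl =>
      obtain ⟨i, hi, hi'⟩ := F.complete x x Relation.ReflTransGen.refl
      exact ⟨⟨(i, [], none, i), rfl, rfl⟩, hi, hi'⟩
    | @tail y z _ h2 ih =>
      obtain ⟨e, he, hs⟩ := h2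
      obtain ⟨⟨⟨i, l, o, j⟩, h⟩, hx, hy⟩ := ih
      simp only at hx hy
      rcases Nat.lt_succ_iff_lt_or_eq.1 he with he | he
      · obtain ⟨j', hj1, hj2⟩ := F.complete (F.src j) z
          (Relation.ReflTransGen.tail (F.sound j) ⟨e, he, hy ▸ hs⟩)
        cases o with
        | none =>
          obtain ⟨rfl, rfl⟩ := h
          exact ⟨⟨(j', [], none, j'), rfl, rfl⟩, hj1.trans hx, hj2⟩
        | some t =>
          obtain ⟨c, h1, h2, h3⟩ := h
          exact ⟨⟨(i, l, some t, j'), c, h1, hj1 ▸ h2, h3⟩, hx, hj2⟩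
      · obtain ⟨j', hj1, hj2⟩ := F.complete z z Relation.ReflTransGen.refl
        cases o with
        | none =>
          obtain ⟨rfl, rfl⟩ := h
          exact ⟨⟨(j, [], some e, j'), F.tgt j, rfl, by rw [hy, hj1]; exact hs, he⟩, hx, hj2⟩
        | some t =>
          obtain ⟨c, h1, h2, h3⟩ := h
          exact ⟨⟨(i, l ++ [(t, j)], some e, j'), F.tgt j, h1.snoc h2 h3,
            by rw [hy, hj1]; exact hs, he⟩, hx, hj2⟩
  · rintro ⟨⟨i, l, o, j⟩, h⟩ ⟨⟨i', l', o', j'⟩, h'⟩ ⟨g1, g2, g3, g4⟩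
    simp only at g1 g2 g3 g4
    subst g3
    cases o with
    | none =>
      obtain ⟨rfl, rfl⟩ := h
      obtain ⟨rfl, rfl⟩ := h'
      exact F.mono _ _ g1
    | some t =>
      obtain ⟨c, h1, h2, h3⟩ := h
      obtain ⟨c', h1', h2', h3'⟩ := h'
      obtain ⟨u, v, hu, hv, hD⟩ := F.mono _ _ g1
      obtain ⟨u', v', hu', hv', hD'⟩ := F.mono _ _ g4
      rw [hu'] at h2'
      have e1 := stepE_back h2 h2'
      subst e1
      have z := stepE_zk h2' h3'
      have z1 := h1'.zk z
      refine ⟨u, v', hu, hv', v, hD, u', ?_, u', ⟨rfl, z.right⟩, hD'⟩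
      rw [hv] at z1
      exact Mid.main g2 h1 h1' z z1 (by rw [hv]; exact Relation.ReflTransGen.refl)
  · rintro ⟨⟨i, l, o, j⟩, h⟩
    cases o with
    | none =>
      obtain ⟨rfl, rfl⟩ := h
      exact F.flat _
    | some t =>
      obtain ⟨c, h1, h2, h3⟩ := h
      exact (F.flat _).comp (h1.flat.comp ((step_flat h2 h3).comp (F.flat _)))

end lev

theorem fam_all {d : ℕ} (V : PVAS d) (k : ℕ) : Nonempty (Fam V k) := by
  induction k with
  | zero => exact fam_zero V
  | succ k ih => exact fam_succ ih.some


theorem union_flat {d : ℕ} {V : PVAS d} {α : Type*} (C : Finset α)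
    (A : α → Set (NVec d × NVec d))
    (h : ∀ c ∈ C, ∃ ws : List (List V.E), ∀ q ∈ A c, PFlat V ws q.1 q.2) :
    ∃ ws : List (List V.E), ∀ c ∈ C, ∀ q ∈ A c, PFlat V ws q.1 q.2 := by
  classical
  induction C using Finset.induction_on with
  | empty => exact ⟨[], by simp⟩
  | insert a C _ ih =>
    obtain ⟨ws, hws⟩ := ih fun c hc => h c (Finset.mem_insert_of_mem hc)
    obtain ⟨ws', hws'⟩ := h a (Finset.mem_insert_self _ _)
    refine ⟨ws ++ ws', fun c hc q hq => ?_⟩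
    rcases Finset.mem_insert.1 hc with rfl | hc
    · exact (PFlat.refl ws q.1).append (hws' q hq)
    · exact (hws c hc q hq).append (PFlat.refl ws' q.2)

theorem reachK_of_reach {d : ℕ} {V : PVAS d} {x y : NVec d} (h : V.Reach x y) :
    ReachK V (d + 1) x y :=
  Relation.ReflTransGen.mono (r := V.Step)
    (fun _ _ ⟨e, h2⟩ => ⟨e, Nat.lt_succ_of_le (V.test_le e), h2⟩) _ _ h

theorem lin_flat {d : ℕ} {V : PVAS d} (b : NVec d × NVec d) (r : ℕ)
    (p : Fin r → NVec d × NVec d)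
    (h : ∀ n : Fin r → ℕ, V.Reach (b + ∑ i, n i • p i).1 (b + ∑ i, n i • p i).2) :
    ∃ ws : List (List V.E), ∀ n : Fin r → ℕ,
      PFlat V ws (b + ∑ i, n i • p i).1 (b + ∑ i, n i • p i).2 := by
  classical
  obtain ⟨F⟩ := fam_all V (d + 1)
  let Q : (Fin r → ℕ) →ₗ[ℕ] (NVec d × NVec d) := Fintype.linearCombination ℕ p
  have hQ : ∀ n, ∑ i, n i • p i = Q n := fun n => (Fintype.linearCombination_apply ℕ p n).symm
  simp only [hQ] at h ⊢
  choose idx hs ht using fun n => F.complete _ _ (reachK_of_reach (h n))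
  let S : (Fin r → ℕ) → Set (Fin r → ℕ) := fun n => {v | Q v ∈ F.D (idx n)}
  obtain ⟨C, hC1, hC2⟩ := coverT (fun n => Submodule.span ℕ (ci '' S n)) (by
    intro f
    have hw := (wellQuasiOrdered_le (α := Fin r → ℕ)).prod F.wqo
    obtain ⟨j, k, hjk, h1, h2⟩ := hw (fun n => (f n, idx (f n)))
    simp only at h1 h2
    refine ⟨j, k, hjk, Submodule.subset_span ?_⟩
    obtain ⟨u, hu⟩ := exists_add_of_le h1
    obtain ⟨a, c, ha, hc, hD⟩ := F.mono _ _ h2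
    refine ⟨u, ?_, ?_⟩
    · have e1 : (Q u).1 = a := by
        rw [hs, hs, hu, map_add] at ha
        simp only [Prod.fst_add, add_assoc] at ha
        exact add_left_cancel (add_left_cancel ha)
      have e2 : (Q u).2 = c := by
        rw [ht, ht, hu, map_add] at hc
        simp only [Prod.snd_add, add_assoc] at hc
        exact add_left_cancel (add_left_cancel hc)
      change Q u ∈ F.D (idx (f j))
      rw [show Q u = (a, c) from Prod.ext e1 e2]
      exact hD
    · rw [hu]
      funext i
      simp [ci])
  obtain ⟨ws, hws⟩ := union_flat (V := V) C
    (fun c => {q | ∃ n, ci n - ci c.1 ∈ Submodule.span ℕ (c.2 : Set (Fin r → ℤ)) ∧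
      q = b + Q n}) (by
    intro c hc
    obtain ⟨T, hT1, hT2⟩ := Submodule.subset_span_finite_of_subset_span (hC1 c hc)
    have hex : ∀ t : T, ∃ v, Q v ∈ F.D (idx c.1) ∧ ci v = (t : Fin r → ℤ) := fun t => by
      obtain ⟨v, hv, hv'⟩ := hT1 t.2
      exact ⟨v, hv, hv'⟩
    choose v hv hv' using hex
    let e := T.equivFin
    obtain ⟨ws, hws⟩ := F.flat (idx c.1) T.card (fun j => Q (v (e.symm j))) (fun j => hv _)
    refine ⟨ws, ?_⟩
    rintro q ⟨n, hn, rfl⟩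
    have hn' : ci n - ci c.1 ∈ Submodule.span ℕ (T : Set (Fin r → ℤ)) :=
      Submodule.span_le.2 hT2 hn
    have hrange : (T : Set (Fin r → ℤ)) = Set.range (fun j => ci (v (e.symm j))) := by
      ext x
      constructor
      · intro hx
        exact ⟨e ⟨x, hx⟩, by simp [hv']⟩
      · rintro ⟨j, rfl⟩
        simp [hv']
    rw [hrange, Submodule.mem_span_range_iff_exists_fun] at hn'
    obtain ⟨m, hm⟩ := hn'
    have hnn : n = c.1 + ∑ j, m j • v (e.symm j) := by
      funext i
      have := congrFun hm i
      simp only [ci, Finset.sum_apply, Pi.smul_apply, Pi.sub_apply, Pi.add_apply] at this ⊢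
      zify
      simp only [nsmul_eq_mul, smul_eq_mul] at this ⊢
      push_cast at this ⊢
      linarith
    have key := hws m
    rw [hs, ht] at key
    have e3 : b + Q n = b + Q c.1 + ∑ j, m j • Q (v (e.symm j)) := by
      rw [hnn, map_add, map_sum, add_assoc]
      simp only [map_nsmul]
    rw [e3]
    simpa [Prod.fst_sum, Prod.snd_sum] using key)
  refine ⟨ws, fun n => ?_⟩
  obtain ⟨c, hc, hn⟩ := hC2 n
  exact hws c hc _ ⟨n, hn, rfl⟩

theorem pvas_semilinear_reach_flattable {d : ℕ} (V : PVAS d)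
    (hsl : IsSemilinSet {p : NVec d × NVec d | V.Reach p.1 p.2}) :
    ∃ ws : List (List V.E),
      ∀ x y : NVec d,
        V.Reach x y ↔
          compList (ws.map fun w => Relation.ReflTransGen (V.StepWord w)) x y := by
  obtain ⟨N, L, hL, hU⟩ := hsl
  obtain ⟨ws, hws⟩ := union_flat (V := V) (Finset.univ : Finset (Fin N)) L (by
    intro i _
    obtain ⟨b, r, p, hb⟩ := hL i
    obtain ⟨ws, hws⟩ := lin_flat (V := V) b r p (by
      intro n
      have : (b + ∑ i, n i • p i) ∈ {p : NVec d × NVec d | V.Reach p.1 p.2} := by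
        rw [hU]
        refine Set.mem_iUnion.2 ⟨i, ?_⟩
        rw [hb]
        exact ⟨n, rfl⟩
      exact this)
    refine ⟨ws, fun q hq => ?_⟩
    rw [hb] at hq
    obtain ⟨n, rfl⟩ := hq
    exact hws n)
  refine ⟨ws, fun x y => ⟨fun h => ?_, fun h => PFlat.sound h⟩⟩
  have : (x, y) ∈ {p : NVec d × NVec d | V.Reach p.1 p.2} := h
  rw [hU] at this
  obtain ⟨i, hi⟩ := Set.mem_iUnion.1 this
  exact hws i (Finset.mem_univ _) _ hi
end

section
/- Let P₁ ⊆ ℕ^{d'} × ℕ^{m} and P₂ ⊆ ℕ^{m} × ℕ^{d''} be well-directed periodic relations. Then the composition P₁ ∘ P₂ ⊆ ℕ^{d'} × ℕ^{d''} is a well-directed periodic relation. -/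
/-- A relation `⊆ ℕ^a × ℕ^b`, viewed as a subset of `ℕ^{a+b}`. -/
abbrev PairN (a b : ℕ) := (Fin a → ℕ) × (Fin b → ℕ)

/-- The corresponding rational space `ℚ^a × ℚ^b ≅ ℚ^{a+b}`. -/
abbrev PairQ (a b : ℕ) := (Fin a → ℚ) × (Fin b → ℚ)

/-- Coordinatewise cast of a pair of natural vectors into rational vectors. -/
def castPQ {a b : ℕ} (x : PairN a b) : PairQ a b :=
  (fun i => (x.1 i : ℚ), fun i => (x.2 i : ℚ))

/-- A set in a commutative monoid is periodic if it contains `0` and is closed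
under addition. -/
def IsPeriodic {M : Type*} [AddCommMonoid M] (P : Set M) : Prop :=
  0 ∈ P ∧ ∀ p ∈ P, ∀ q ∈ P, p + q ∈ P

/-- `P ⊆ ℕ^{a+b}` is well-directed: every sequence of elements of `P` has an infinite
subsequence `(p_{m_k})` such that `p_{m_j} + ℕ·(p_{m_k} − p_{m_j}) ⊆ P` for all
`j ≤ k`. -/
def WellDirected {a b : ℕ} (P : Set (PairN a b)) : Prop :=
  ∀ p : ℕ → PairN a b, (∀ m, p m ∈ P) →
    ∃ φ : ℕ → ℕ, StrictMono φ ∧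
      ∀ j k : ℕ, j ≤ k → ∀ t : ℕ, ∃ q ∈ P,
        castPQ q = castPQ (p (φ j)) + (t : ℚ) • (castPQ (p (φ k)) - castPQ (p (φ j)))

/-- Composition of relations. -/
def RelComp {α β γ : Type*} (R : Set (α × β)) (S : Set (β × γ)) : Set (α × γ) :=
  {p | ∃ x, (p.1, x) ∈ R ∧ (x, p.2) ∈ S}

/-- The composition of well-directed periodic relations is a
well-directed periodic relation. -/
theorem relComp_wellDirected_periodic {d' m d'' : ℕ}
    (P₁ : Set (PairN d' m)) (P₂ : Set (PairN m d''))
    (h₁p : IsPeriodic P₁) (h₁w : WellDirected P₁)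
    (h₂p : IsPeriodic P₂) (h₂w : WellDirected P₂) :
    IsPeriodic (RelComp P₁ P₂) ∧ WellDirected (RelComp P₁ P₂) := by
  refine ⟨⟨⟨0, h₁p.1, h₂p.1⟩, ?_⟩, ?_⟩
  · rintro p ⟨x, hx1, hx2⟩ q ⟨y, hy1, hy2⟩
    exact ⟨x + y, h₁p.2 _ hx1 _ hy1, h₂p.2 _ hx2 _ hy2⟩
  · intro p hp
    choose x hx1 hx2 using hp
    obtain ⟨φ, hφ, h1⟩ := h₁w (fun n => ((p n).1, x n)) hx1
    obtain ⟨ψ, hψ, h2⟩ := h₂w (fun n => (x (φ n), (p (φ n)).2)) (fun n => hx2 (φ n))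
    refine ⟨φ ∘ ψ, hφ.comp hψ, fun j k hjk t => ?_⟩
    obtain ⟨⟨a, b⟩, hq1, e1⟩ := h1 (ψ j) (ψ k) (hψ.monotone hjk) t
    obtain ⟨⟨c, d⟩, hq2, e2⟩ := h2 j k hjk t
    have ea := congrArg Prod.fst e1
    have eb := congrArg Prod.snd e1
    have ec := congrArg Prod.fst e2
    have ed := congrArg Prod.snd e2
    have hbc : b = c := by
      have h := eb.trans ec.symm
      funext i
      have hi := congrFun h i
      simpa [castPQ] using hi
    subst hbc
    exact ⟨(a, d), ⟨b, hq1, hq2⟩, Prod.ext ea ed⟩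
end

section
/- Let P₁ ⊆ ℕ^{d'} × ℕ^{m} and P₂ ⊆ ℕ^{m} × ℕ^{d''} be smooth periodic relations satisfying property (2'). Then P₁ ∘ P₂ is a smooth periodic relation satisfying property (2'). -/
/-- `v ∈ ℚ^{a+b}` is a direction of `P ⊆ ℕ^{a+b}`: some full line `x + ℕ·(n v)` with
`n > 0` is contained in `P`. -/
def IsDirection {a b : ℕ} (P : Set (PairN a b)) (v : PairQ a b) : Prop :=
  ∃ n : ℕ, 0 < n ∧ ∃ x : PairN a b, ∀ k : ℕ, ∃ p ∈ P,
    castPQ p = castPQ x + ((k * n : ℕ) : ℚ) • v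

/-- The set of directions of `P`. -/
def dirSet {a b : ℕ} (P : Set (PairN a b)) : Set (PairQ a b) := {v | IsDirection P v}

/-- A cone: contains `0`, closed under addition and under multiplication by positive
rationals. -/
def IsCone {a b : ℕ} (C : Set (PairQ a b)) : Prop :=
  0 ∈ C ∧ (∀ u ∈ C, ∀ v ∈ C, u + v ∈ C) ∧ ∀ u ∈ C, ∀ l : ℚ, 0 < l → l • u ∈ C

/-- Definable subsets of `ℚ^{a+b}`: finite Boolean combinations of half-spaces
(equivalently, first-order definable over `(ℚ,+,≥)`). -/
inductive IsQDef {a b : ℕ} : Set (PairQ a b) → Prop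
  | halfspace (c : PairQ a b) (t : ℚ) :
      IsQDef {x | t ≤ (∑ i, c.1 i * x.1 i) + ∑ i, c.2 i * x.2 i}
  | compl {S : Set (PairQ a b)} : IsQDef S → IsQDef Sᶜ
  | inter {S T : Set (PairQ a b)} : IsQDef S → IsQDef T → IsQDef (S ∩ T)

/-- `P` is asymptotically definable if its set of directions is a definable cone. -/
def AsymptoticallyDefinable {a b : ℕ} (P : Set (PairN a b)) : Prop :=
  IsCone (dirSet P) ∧ IsQDef (dirSet P)

/-- `P` is smooth if it is asymptotically definable and well-directed. -/
def IsSmooth {a b : ℕ} (P : Set (PairN a b)) : Prop :=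
  AsymptoticallyDefinable P ∧ WellDirected P

/-- Property (2'): for every well-directed periodic relation `P ⊆ bigP` there is a
definable cone `R ⊇ dir(P)` such that every `(e,f) ∈ R` can be pumped starting from
some element of `P`: there are `(a,b) ∈ P` and `n > 0` with `(a,b) + ℕ·n·(e,f) ⊆ bigP`. -/
def Prop2' {a b : ℕ} (bigP : Set (PairN a b)) : Prop :=
  ∀ P : Set (PairN a b), P ⊆ bigP → IsPeriodic P → WellDirected P →
    ∃ R : Set (PairQ a b), IsCone R ∧ IsQDef R ∧ dirSet P ⊆ R ∧
      ∀ ef ∈ R, ∃ ab ∈ P, ∃ n : ℕ, 0 < n ∧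
        ∀ k : ℕ, ∃ p ∈ bigP, castPQ p = castPQ ab + ((k * n : ℕ) : ℚ) • ef

namespace FM

inductive QD {V : Type} [AddCommGroup V] [Module ℚ V] : Set V → Prop
  | half (f : V →ᵃ[ℚ] ℚ) : QD {x | 0 ≤ f x}
  | compl {S : Set V} : QD S → QD Sᶜ
  | inter {S T : Set V} : QD S → QD T → QD (S ∩ T)

section
variable {V W : Type} [AddCommGroup V] [Module ℚ V] [AddCommGroup W] [Module ℚ W]

theorem QD.preimage {S : Set V} (h : QD S) (g : W →ᵃ[ℚ] V) : QD (g ⁻¹' S) := by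
  induction h with
  | half f => exact QD.half (f.comp g)
  | compl _ ih => exact QD.compl ih
  | inter _ _ ih1 ih2 => exact QD.inter ih1 ih2

theorem QD.union {S T : Set V} (h : QD S) (h' : QD T) : QD (S ∪ T) := by
  have := QD.compl (QD.inter (QD.compl h) (QD.compl h'))
  rwa [Set.compl_inter, compl_compl, compl_compl] at this

theorem QD.empty : QD (∅ : Set V) := by
  have := QD.inter (QD.half (0 : V →ᵃ[ℚ] ℚ)) (QD.compl (QD.half (0 : V →ᵃ[ℚ] ℚ)))
  rwa [Set.inter_compl_self] at this

theorem QD.exlist {α : Type} (l : List α) (F : α → Set V) (h : ∀ a, QD (F a)) :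
    QD {x | ∃ a ∈ l, x ∈ F a} := by
  induction l with
  | nil => simpa using QD.empty
  | cons a l ih =>
    have := (h a).union ih
    convert this using 1
    ext x
    simp

def Same (a y y' : ℚ) : Prop := (a ≤ y ↔ a ≤ y') ∧ (y ≤ a ↔ y' ≤ a)

theorem affine_split (f : (V × ℚ) →ᵃ[ℚ] ℚ) (x : V) (y : ℚ) :
    f (x, y) = f (x, 0) + y * f.linear (0, 1) := by
  have h := f.map_vadd (x, 0) (0, y)
  have h2 : f.linear (0, y) = y * f.linear (0, 1) := by
    rw [← smul_eq_mul, ← map_smul]; simp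
  simp only [vadd_eq_add, Prod.mk_add_mk, zero_add, add_zero] at h
  rw [h, h2]; ring

def inl0 : V →ᵃ[ℚ] (V × ℚ) := (LinearMap.inl ℚ V ℚ).toAffineMap

theorem QD.good {S : Set (V × ℚ)} (h : QD S) : ∃ T : List (V →ᵃ[ℚ] ℚ), ∀ x y y',
    (∀ τ ∈ T, Same (τ x) y y') → ((x, y) ∈ S ↔ (x, y') ∈ S) := by
  induction h with
  | half f =>
    refine ⟨[(-(f.linear (0, 1))⁻¹) • f.comp inl0], ?_⟩
    intro x y y' h
    have h := h _ (List.mem_singleton_self _)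
    simp only [Set.mem_ofPred_eq, affine_split f x y, affine_split f x y']
    have e : ((-(f.linear (0, 1))⁻¹) • f.comp inl0) x = -(f.linear (0, 1))⁻¹ * f (x, 0) := by
      simp [inl0]
    rw [e] at h
    generalize f.linear (0, 1) = c at *
    generalize f (x, 0) = u at *
    obtain ⟨h1, h2⟩ := h
    rcases lt_trichotomy c 0 with hc | hc | hc
    · have key : ∀ z, (z ≤ -c⁻¹ * u ↔ 0 ≤ u + z * c) := by
        intro z
        have : -c⁻¹ * u = (-u) / c := by field_simp
        rw [this, le_div_iff_of_neg hc]
        constructor <;> intro h <;> linarith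
      rw [← key, ← key]; exact h2
    · simp [hc]
    · have key : ∀ z, (-c⁻¹ * u ≤ z ↔ 0 ≤ u + z * c) := by
        intro z
        have : -c⁻¹ * u = (-u) / c := by field_simp
        rw [this, div_le_iff₀ hc]
        constructor <;> intro h <;> linarith
      rw [← key, ← key]; exact h1
  | compl _ ih =>
    obtain ⟨T, hT⟩ := ih
    exact ⟨T, fun x y y' h => not_congr (hT x y y' h)⟩
  | inter _ _ ih1 ih2 =>
    obtain ⟨T, hT⟩ := ih1
    obtain ⟨T', hT'⟩ := ih2
    refine ⟨T ++ T', fun x y y' h => and_congr (hT x y y' ?_) (hT' x y y' ?_)⟩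
    · intro τ ht; exact h τ (List.mem_append_left _ ht)
    · intro τ ht; exact h τ (List.mem_append_right _ ht)

/-- greatest element at most y -/
theorem exmax {α : Type} (l : List α) (v : α → ℚ) (y : ℚ) : (∀ a ∈ l, y < v a) ∨
    ∃ a ∈ l, v a ≤ y ∧ ∀ b ∈ l, v b ≤ y → v b ≤ v a := by
  induction l with
  | nil => left; simp
  | cons c l ih =>
    by_cases hc : v c ≤ y
    · right
      rcases ih with h | ⟨a, ha, h1, h2⟩
      · refine ⟨c, by simp, hc, ?_⟩
        intro b hb hby
        rcases List.mem_cons.1 hb with rfl | hb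
        · exact le_rfl
        · exact absurd (h b hb) (not_lt.2 hby)
      · rcases le_total (v a) (v c) with hac | hac
        · refine ⟨c, by simp, hc, ?_⟩
          intro b hb hby
          rcases List.mem_cons.1 hb with rfl | hb
          · exact le_rfl
          · exact (h2 b hb hby).trans hac
        · refine ⟨a, by simp [ha], h1, ?_⟩
          intro b hb hby
          rcases List.mem_cons.1 hb with rfl | hb
          · exact hac
          · exact h2 b hb hby
    · push Not at hc
      rcases ih with h | ⟨a, ha, h1, h2⟩
      · left
        intro b hb
        rcases List.mem_cons.1 hb with rfl | hb
        · exact hc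
        · exact h b hb
      · right
        refine ⟨a, by simp [ha], h1, ?_⟩
        intro b hb hby
        rcases List.mem_cons.1 hb with rfl | hb
        · exact absurd hc (not_lt.2 hby)
        · exact h2 b hb hby

theorem exmin {α : Type} (l : List α) (v : α → ℚ) (y : ℚ) : (∀ a ∈ l, v a < y) ∨
    ∃ a ∈ l, y ≤ v a ∧ ∀ b ∈ l, y ≤ v b → v a ≤ v b := by
  rcases exmax l (fun a => - v a) (-y) with h | ⟨a, ha, h1, h2⟩
  · left; intro a ha; have := h a ha; linarith
  · right; refine ⟨a, ha, by linarith, ?_⟩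
    intro b hb hy; have := h2 b hb (by linarith); linarith

theorem QD.proj {S : Set (V × ℚ)} (h : QD S) : QD {x | ∃ y, (x, y) ∈ S} := by
  obtain ⟨T, hT⟩ := h.good
  have sub : ∀ σ : V →ᵃ[ℚ] ℚ, QD {x | (x, σ x) ∈ S} := fun σ =>
    h.preimage ((AffineMap.id ℚ V).prod σ)
  have h0 := sub 0
  have h1 := QD.exlist T (fun τ => {x | (x, τ x + 1) ∈ S})
    (fun τ => sub (τ + AffineMap.const ℚ V 1))
  have h2 := QD.exlist T (fun τ => {x | (x, τ x - 1) ∈ S})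
    (fun τ => sub (τ - AffineMap.const ℚ V 1))
  have h3 := QD.exlist T (fun τ => {x | ∃ τ' ∈ T, x ∈ {x | (x, (1/2 : ℚ) * (τ x + τ' x)) ∈ S}})
    (fun τ => QD.exlist T _ (fun τ' => sub ((1/2 : ℚ) • (τ + τ'))))
  have := (h0.union h1).union (h2.union h3)
  convert this using 1
  ext x
  simp only [Set.mem_ofPred_eq, Set.mem_union]
  constructor
  · rintro ⟨y, hy⟩
    rcases exmax T (fun τ => τ x) y with hl | ⟨a, ha, ha1, ha2⟩ <;>
    rcases exmin T (fun τ => τ x) y with hu | ⟨b, hb, hb1, hb2⟩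
    · left; left
      refine (hT x y _ ?_).1 hy
      intro τ ht; have h1 := hl τ ht; have h2 := hu τ ht; exact absurd h1 (not_lt.2 h2.le)
    · right; left
      refine ⟨b, hb, (hT x y _ ?_).1 hy⟩
      intro τ ht; have := hl τ ht; have := hb2 τ ht; simp only [Same] at *
      have := this (by linarith)
      constructor <;> constructor <;> intro _ <;> linarith
    · left; right
      refine ⟨a, ha, (hT x y _ ?_).1 hy⟩
      intro τ ht; have := hu τ ht; have := ha2 τ ht; simp only [Same] at *
      have := this (by linarith)
      constructor <;> constructor <;> intro _ <;> linarith
    · right; right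
      refine ⟨a, ha, b, hb, (hT x y _ ?_).1 hy⟩
      intro τ ht
      have A := ha2 τ ht
      have B := hb2 τ ht
      have C := ha2 b hb
      have D := hb2 a ha
      simp only [Same] at *
      constructor <;> constructor <;> intro hh
      · have := A hh; linarith
      · by_contra hc
        have := B (by linarith)
        have := C
        rcases eq_or_lt_of_le hb1 with h | h
        · have := C (by linarith); linarith
        · linarith
      · have := B hh; linarith
      · by_contra hc
        have := A (by linarith)
        rcases eq_or_lt_of_le ha1 with h | h
        · have := D (by linarith); linarith
        · linarith
  · rintro ((h | ⟨a, _, h⟩) | (⟨a, _, h⟩ | ⟨a, _, b, _, h⟩)) <;> exact ⟨_, h⟩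
end

theorem QD.projN (m : ℕ) : ∀ {V : Type} [AddCommGroup V] [Module ℚ V]
    {S : Set (V × (Fin m → ℚ))}, QD S → QD {x | ∃ g, (x, g) ∈ S} := by
  induction m with
  | zero =>
    intro V _ _ S h
    have := h.preimage (LinearMap.inl ℚ V (Fin 0 → ℚ)).toAffineMap
    convert this using 1
    ext x
    simp only [Set.mem_ofPred_eq, Set.mem_preimage]
    constructor
    · rintro ⟨g, hg⟩
      rw [Subsingleton.elim g 0] at hg
      exact hg
    · intro h; exact ⟨0, h⟩
  | succ m ih =>
    intro V _ _ S h
    let L : ((V × ℚ) × (Fin m → ℚ)) →ₗ[ℚ] (V × (Fin (m+1) → ℚ)) :=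
      { toFun := fun p => (p.1.1, Fin.cons p.1.2 p.2)
        map_add' := by
          intro p q
          ext i
          · rfl
          · refine Fin.cases ?_ (fun i => ?_) i <;> simp
        map_smul' := by
          intro c p
          ext i
          · rfl
          · refine Fin.cases ?_ (fun i => ?_) i <;> simp }
    have := (ih (h.preimage L.toAffineMap)).proj
    convert this using 1
    ext x
    simp only [Set.mem_ofPred_eq, Set.mem_preimage]
    constructor
    · rintro ⟨g, hg⟩
      refine ⟨g 0, Fin.tail g, ?_⟩
      change (x, (Fin.cons (g 0) (Fin.tail g) : Fin (m+1) → ℚ)) ∈ S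
      rwa [Fin.cons_self_tail]
    · rintro ⟨y, g, h⟩
      exact ⟨_, h⟩

theorem toQD {a b : ℕ} {S : Set (PairQ a b)} (h : IsQDef S) : QD S := by
  induction h with
  | halfspace c t =>
    let L : PairQ a b →ₗ[ℚ] ℚ :=
      { toFun := fun x => (∑ i, c.1 i * x.1 i) + ∑ i, c.2 i * x.2 i
        map_add' := by
          intro x y
          simp only [Prod.fst_add, Prod.snd_add, Pi.add_apply, mul_add, Finset.sum_add_distrib]
          ring
        map_smul' := by
          intro r x
          simp only [Prod.smul_fst, Prod.smul_snd, Pi.smul_apply, smul_eq_mul, RingHom.id_apply,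
            mul_add, Finset.mul_sum, mul_left_comm] }
    have := QD.half (L.toAffineMap - AffineMap.const ℚ _ t)
    convert this using 1
    ext x
    simp [L]
  | compl _ ih => exact ih.compl
  | inter _ _ ih1 ih2 => exact ih1.inter ih2

theorem lin_pi {n : ℕ} (L : (Fin n → ℚ) →ₗ[ℚ] ℚ) (x : Fin n → ℚ) :
    L x = ∑ i, L (Pi.single i 1) * x i := by
  rw [LinearMap.pi_apply_eq_sum_univ L x]
  refine Finset.sum_congr rfl fun i _ => ?_
  rw [smul_eq_mul, mul_comm]
  congr 2
  ext j
  simp [Pi.single_apply, eq_comm]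

theorem ofQD {a b : ℕ} {S : Set (PairQ a b)} (h : QD S) : IsQDef S := by
  induction h with
  | half f =>
    have := IsQDef.halfspace (a := a) (b := b)
      (fun i => f.linear (Pi.single i 1, 0), fun i => f.linear (0, Pi.single i 1)) (- f 0)
    convert this using 1
    ext x
    have h1 := lin_pi (f.linear.comp (LinearMap.inl ℚ _ _)) x.1
    have h2 := lin_pi (f.linear.comp (LinearMap.inr ℚ _ _)) x.2
    simp only [LinearMap.comp_apply, LinearMap.inl_apply, LinearMap.inr_apply] at h1 h2
    have h3 : f x = f.linear x + f 0 := by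
      have := f.map_vadd 0 x
      simpa using this
    have h4 : f.linear x = f.linear (x.1, 0) + f.linear (0, x.2) := by
      rw [← map_add]; simp
    simp only [Set.mem_ofPred_eq]
    rw [← h1, ← h2, h3, h4]
    constructor <;> intro h <;> linarith
  | compl _ ih => exact ih.compl
  | inter _ _ ih1 ih2 => exact ih1.inter ih2

theorem comp_def {a m b : ℕ} {R : Set (PairQ a m)} {S : Set (PairQ m b)}
    (hR : IsQDef R) (hS : IsQDef S) : IsQDef (RelComp R S) := by
  apply ofQD
  let A : (PairQ a b × (Fin m → ℚ)) →ₗ[ℚ] PairQ a m :=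
    ((LinearMap.fst ℚ _ _).comp (LinearMap.fst ℚ _ _)).prod (LinearMap.snd ℚ _ _)
  let B : (PairQ a b × (Fin m → ℚ)) →ₗ[ℚ] PairQ m b :=
    (LinearMap.snd ℚ _ _).prod ((LinearMap.snd ℚ _ _).comp (LinearMap.fst ℚ _ _))
  exact QD.projN m (((toQD hR).preimage A.toAffineMap).inter ((toQD hS).preimage B.toAffineMap))

theorem comp_cone {a m b : ℕ} {R : Set (PairQ a m)} {S : Set (PairQ m b)}
    (hR : IsCone R) (hS : IsCone S) : IsCone (RelComp R S) := by
  refine ⟨⟨0, hR.1, hS.1⟩, ?_, ?_⟩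
  · rintro u ⟨x, h1, h2⟩ v ⟨y, h3, h4⟩
    exact ⟨x + y, hR.2.1 _ h1 _ h3, hS.2.1 _ h2 _ h4⟩
  · rintro u ⟨x, h1, h2⟩ l hl
    exact ⟨l • x, hR.2.2 _ h1 l hl, hS.2.2 _ h2 l hl⟩

theorem comp_periodic {a m b : ℕ} {R : Set (PairN a m)} {S : Set (PairN m b)}
    (hR : IsPeriodic R) (hS : IsPeriodic S) : IsPeriodic (RelComp R S) := by
  refine ⟨⟨0, hR.1, hS.1⟩, ?_⟩
  rintro u ⟨x, h1, h2⟩ v ⟨y, h3, h4⟩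
  exact ⟨x + y, hR.2 _ h1 _ h3, hS.2 _ h2 _ h4⟩

/-- cast of a vector -/
def cv {n : ℕ} (x : Fin n → ℕ) : Fin n → ℚ := fun i => (x i : ℚ)

theorem cv_inj {n : ℕ} {x y : Fin n → ℕ} (h : cv x = cv y) : x = y := by
  ext i
  have := congrFun h i
  exact Nat.cast_injective (R := ℚ) this

theorem cv_add {n : ℕ} (x y : Fin n → ℕ) : cv (x + y) = cv x + cv y := by
  ext i; simp [cv]

theorem cast_eq {a b : ℕ} (x : PairN a b) (v : PairQ a b) :
    castPQ x = v ↔ cv x.1 = v.1 ∧ cv x.2 = v.2 := by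
  rw [Prod.ext_iff]; rfl

/-- The line through two members is in the set. -/
def Ln {a b : ℕ} (P : Set (PairN a b)) (p q : PairN a b) : Prop :=
  ∀ t : ℕ, ∃ r ∈ P, castPQ r = castPQ p + (t : ℚ) • (castPQ q - castPQ p)

theorem triple {a m b : ℕ} {P₁ : Set (PairN a m)} {P₂ : Set (PairN m b)} {Q : Set (PairN a b)}
    (h1 : WellDirected P₁) (h2 : WellDirected P₂) (h3 : WellDirected Q)
    (v : ℕ → Fin a → ℕ) (x : ℕ → Fin m → ℕ) (w : ℕ → Fin b → ℕ)
    (hv : ∀ k, (v k, x k) ∈ P₁) (hw : ∀ k, (x k, w k) ∈ P₂) (hq : ∀ k, (v k, w k) ∈ Q) :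
    ∃ φ : ℕ → ℕ, StrictMono φ ∧ ∀ j k : ℕ, j ≤ k → ∀ t : ℕ, ∃ v' x' w',
      (v', x') ∈ P₁ ∧ (x', w') ∈ P₂ ∧ (v', w') ∈ Q ∧
      cv v' = cv (v (φ j)) + (t : ℚ) • (cv (v (φ k)) - cv (v (φ j))) ∧
      cv x' = cv (x (φ j)) + (t : ℚ) • (cv (x (φ k)) - cv (x (φ j))) ∧
      cv w' = cv (w (φ j)) + (t : ℚ) • (cv (w (φ k)) - cv (w (φ j))) := by
  obtain ⟨f, hf, Hf⟩ := h1 (fun k => (v k, x k)) hv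
  obtain ⟨g, hg, Hg⟩ := h2 (fun k => (x (f k), w (f k))) (fun k => hw _)
  obtain ⟨h, hh, Hh⟩ := h3 (fun k => (v (f (g k)), w (f (g k)))) (fun k => hq _)
  refine ⟨fun k => f (g (h k)), hf.comp (hg.comp hh), ?_⟩
  intro j k hjk t
  obtain ⟨⟨v1, x1⟩, q1, e1⟩ := Hf (g (h j)) (g (h k)) ((hg.comp hh).monotone hjk) t
  obtain ⟨⟨x2, w2⟩, q2, e2⟩ := Hg (h j) (h k) (hh.monotone hjk) t
  obtain ⟨⟨v3, w3⟩, q3, e3⟩ := Hh j k hjk t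
  obtain ⟨ev1, ex1⟩ := (cast_eq _ _).1 e1
  obtain ⟨ex2, ew2⟩ := (cast_eq _ _).1 e2
  obtain ⟨ev3, ew3⟩ := (cast_eq _ _).1 e3
  have hx : x2 = x1 := cv_inj (ex2.trans ex1.symm)
  have hv' : v3 = v1 := cv_inj (ev3.trans ev1.symm)
  have hw' : w3 = w2 := cv_inj (ew3.trans ew2.symm)
  subst hx hv' hw'
  exact ⟨_, _, _, q1, q2, q3, ev1, ex1, ew2⟩

theorem wd_comp {a m b : ℕ} {P₁ : Set (PairN a m)} {P₂ : Set (PairN m b)}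
    (h1 : WellDirected P₁) (h2 : WellDirected P₂) : WellDirected (RelComp P₁ P₂) := by
  intro p hp
  choose x hx1 hx2 using hp
  obtain ⟨f, hf, Hf⟩ := h1 (fun k => ((p k).1, x k)) hx1
  obtain ⟨g, hg, Hg⟩ := h2 (fun k => (x (f k), (p (f k)).2)) (fun k => hx2 _)
  refine ⟨fun k => f (g k), hf.comp hg, ?_⟩
  intro j k hjk t
  obtain ⟨⟨v1, x1⟩, q1, e1⟩ := Hf (g j) (g k) (hg.monotone hjk) t
  obtain ⟨⟨x2, w2⟩, q2, e2⟩ := Hg j k hjk t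
  obtain ⟨ev1, ex1⟩ := (cast_eq _ _).1 e1
  obtain ⟨ex2, ew2⟩ := (cast_eq _ _).1 e2
  have hx : x2 = x1 := cv_inj (ex2.trans ex1.symm)
  subst hx
  exact ⟨(v1, w2), ⟨_, q1, q2⟩, (cast_eq _ _).2 ⟨ev1, ew2⟩⟩

theorem prop2_comp {a m b : ℕ} {P₁ : Set (PairN a m)} {P₂ : Set (PairN m b)}
    (p1 : IsPeriodic P₁) (w1 : WellDirected P₁) (h1 : Prop2' P₁)
    (p2 : IsPeriodic P₂) (w2 : WellDirected P₂) (h2 : Prop2' P₂) :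
    Prop2' (RelComp P₁ P₂) := by
  intro Q hQ pQ wQ
  obtain ⟨R₁, c1, d1, s1, H1⟩ := h1 {p | p ∈ P₁ ∧ ∃ w, (p.2, w) ∈ P₂ ∧ (p.1, w) ∈ Q}
    (fun p hp => hp.1)
    ⟨⟨p1.1, 0, p2.1, pQ.1⟩, by
      rintro p ⟨h1, w, h2, h3⟩ q ⟨h1', w', h2', h3'⟩
      exact ⟨p1.2 _ h1 _ h1', w + w', p2.2 _ h2 _ h2', pQ.2 _ h3 _ h3'⟩⟩
    (by
      intro p hp
      choose hp w hw hq using hp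
      obtain ⟨φ, hφ, H⟩ := triple w1 w2 wQ (fun k => (p k).1) (fun k => (p k).2) w hp hw hq
      refine ⟨φ, hφ, fun j k hjk t => ?_⟩
      obtain ⟨v', x', w', i1, i2, i3, e1, e2, e3⟩ := H j k hjk t
      exact ⟨(v', x'), ⟨i1, w', i2, i3⟩, (cast_eq _ _).2 ⟨e1, e2⟩⟩)
  obtain ⟨R₂, c2, d2, s2, H2⟩ := h2 {p | p ∈ P₂ ∧ ∃ v, (v, p.1) ∈ P₁ ∧ (v, p.2) ∈ Q}
    (fun p hp => hp.1)
    ⟨⟨p2.1, 0, p1.1, pQ.1⟩, by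
      rintro p ⟨h1, w, h2, h3⟩ q ⟨h1', w', h2', h3'⟩
      exact ⟨p2.2 _ h1 _ h1', w + w', p1.2 _ h2 _ h2', pQ.2 _ h3 _ h3'⟩⟩
    (by
      intro p hp
      choose hp v hv hq using hp
      obtain ⟨φ, hφ, H⟩ := triple w1 w2 wQ v (fun k => (p k).1) (fun k => (p k).2) hv hp hq
      refine ⟨φ, hφ, fun j k hjk t => ?_⟩
      obtain ⟨v', x', w', i1, i2, i3, e1, e2, e3⟩ := H j k hjk t
      exact ⟨(x', w'), ⟨i2, v', i1, i3⟩, (cast_eq _ _).2 ⟨e2, e3⟩⟩)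
  refine ⟨RelComp R₁ R₂, comp_cone c1 c2, comp_def d1 d2, ?_, ?_⟩
  · rintro ⟨e, f⟩ ⟨n, hn, ⟨xa, xb⟩, hx⟩
    choose p hp he using hx
    have hp' := fun k => hQ (hp k)
    choose y hy1 hy2 using hp'
    obtain ⟨φ, hφ, H⟩ := triple w1 w2 wQ (fun k => (p k).1) y (fun k => (p k).2) hy1 hy2 hp
    have H := H 0 1 (by norm_num)
    have hlt : φ 0 < φ 1 := hφ (by norm_num)
    have ev := fun k => ((cast_eq _ _).1 (he k)).1
    have ew := fun k => ((cast_eq _ _).1 (he k)).2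
    simp only [ev, ew] at H
    set r : ℚ := ((φ 1 : ℚ) - φ 0) * n with hr
    have hrpos : 0 < r := by
      have : (φ 0 : ℚ) < φ 1 := by exact_mod_cast hlt
      have : (0 : ℚ) < n := by exact_mod_cast hn
      rw [hr]; apply mul_pos <;> linarith
    have hd1 : ((r • e, cv (y (φ 1)) - cv (y (φ 0))) : PairQ a m) ∈ R₁ := by
      apply s1
      refine ⟨1, one_pos, ((p (φ 0)).1, y (φ 0)), fun k => ?_⟩
      obtain ⟨v', x', w', i1, i2, i3, e1, e2, e3⟩ := H k
      refine ⟨(v', x'), ⟨i1, w', i2, i3⟩, (cast_eq _ _).2 ⟨?_, ?_⟩⟩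
      · change cv v' = cv (p (φ 0)).1 + ((k * 1 : ℕ) : ℚ) • (r • e)
        rw [e1, ev]
        ext i
        simp [castPQ, hr]
        left
        ring
      · rw [e2]
        ext i
        simp [castPQ, cv]
    have hd2 : ((cv (y (φ 1)) - cv (y (φ 0)), r • f) : PairQ m b) ∈ R₂ := by
      apply s2
      refine ⟨1, one_pos, (y (φ 0), (p (φ 0)).2), fun k => ?_⟩
      obtain ⟨v', x', w', i1, i2, i3, e1, e2, e3⟩ := H k
      refine ⟨(x', w'), ⟨i2, v', i1, i3⟩, (cast_eq _ _).2 ⟨?_, ?_⟩⟩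
      · rw [e2]
        ext i
        simp [castPQ, cv]
      · change cv w' = cv (p (φ 0)).2 + ((k * 1 : ℕ) : ℚ) • (r • f)
        rw [e3, ew]
        ext i
        simp [castPQ, hr]
        left
        ring
    have A := c1.2.2 _ hd1 r⁻¹ (inv_pos.2 hrpos)
    have B := c2.2.2 _ hd2 r⁻¹ (inv_pos.2 hrpos)
    rw [Prod.smul_mk, inv_smul_smul₀ hrpos.ne'] at A B
    exact ⟨_, A, B⟩
  · rintro ⟨e, f⟩ ⟨g, hg1, hg2⟩
    obtain ⟨⟨a1, b1⟩, ⟨i1, c1', i2, i3⟩, n1, hn1, L1⟩ := H1 _ hg1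
    obtain ⟨⟨b2, c2'⟩, ⟨j1, a2, j2, j3⟩, n2, hn2, L2⟩ := H2 _ hg2
    refine ⟨_, pQ.2 _ i3 _ j3, n1 * n2, Nat.mul_pos hn1 hn2, fun k => ?_⟩
    obtain ⟨⟨u1, x1⟩, m1, E1⟩ := L1 (k * n2)
    obtain ⟨⟨x2, u2⟩, m2, E2⟩ := L2 (k * n1)
    obtain ⟨E1a, E1b⟩ := (cast_eq _ _).1 E1
    obtain ⟨E2a, E2b⟩ := (cast_eq _ _).1 E2
    have q1 := p1.2 _ m1 _ j2
    have q2 := p2.2 _ i2 _ m2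
    have hx : b1 + x2 = x1 + b2 := by
      apply cv_inj
      rw [cv_add, cv_add]
      simp only at E1b E2a
      rw [E1b, E2a]
      ext i
      simp [castPQ, cv]
      ring
    simp only [Prod.mk_add_mk] at q1 q2
    rw [hx] at q2
    refine ⟨(u1 + a2, c1' + u2), ⟨_, q1, q2⟩, (cast_eq _ _).2 ⟨?_, ?_⟩⟩
    · simp only [cv_add]
      simp only at E1a
      rw [E1a]
      ext i
      simp [castPQ, cv]
      ring
    · simp only [cv_add]
      simp only at E2b
      rw [E2b]
      ext i
      simp [castPQ, cv]
      ring

end FM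

/-- The composition of smooth periodic relations satisfying
property (2') is a smooth periodic relation satisfying property (2'). -/
theorem relComp_smooth_prop2' {d' m d'' : ℕ}
    (P₁ : Set (PairN d' m)) (P₂ : Set (PairN m d''))
    (h₁p : IsPeriodic P₁) (h₁s : IsSmooth P₁) (h₁ : Prop2' P₁)
    (h₂p : IsPeriodic P₂) (h₂s : IsSmooth P₂) (h₂ : Prop2' P₂) :
    IsPeriodic (RelComp P₁ P₂) ∧ IsSmooth (RelComp P₁ P₂) ∧ Prop2' (RelComp P₁ P₂) := by
  have hp := FM.comp_periodic h₁p h₂p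
  have hw := FM.wd_comp h₁s.2 h₂s.2
  have h2 := FM.prop2_comp h₁p h₁s.2 h₁ h₂p h₂s.2 h₂
  refine ⟨hp, ⟨?_, hw⟩, h2⟩
  obtain ⟨R, hc, hd, hs, H⟩ := h2 _ subset_rfl hp hw
  have : dirSet (RelComp P₁ P₂) = R := by
    apply Set.Subset.antisymm hs
    intro v hv
    obtain ⟨ab, _, n, hn, h⟩ := H v hv
    exact ⟨n, hn, ab, h⟩
  unfold AsymptoticallyDefinable
  rw [this]
  exact ⟨hc, hd⟩
end

section
/- Let (A, ≤) be a partially ordered set of generalized transitions with endpoint maps into ℕ^d as described. For every nonempty run ρ = η₁…η_r, the transformer relation of ρ decomposes as P_ρ = P_{src(η₁)} ∘ P_{η₁} ∘ P_{src(η₂)} ∘ P_{η₂} ∘ … ∘ P_{src(η_r)} ∘ P_{η_r} ∘ P_{tgt(η_r)}, where ∘ denotes composition of relations on ℕ^d. -/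
section Runs

variable {A : Type*} [PartialOrder A] {d : ℕ}

/-- A run over a partially ordered set `A` of generalized transitions with endpoint
maps `src, tgt : A → ℕ^d`: either an empty run at some configuration (`steps = []`,
in which case `base` is that configuration), or a nonempty compatible sequence of
generalized transitions (`base` is then irrelevant). -/
structure Run (src tgt : A → NVec d) where
  steps : List A
  base : NVec d
  chain : steps.Chain' fun η η' => tgt η = src η'

variable {src tgt : A → NVec d}

/-- The source of a run. -/
def Run.source (ρ : Run src tgt) : NVec d :=
  match ρ.steps with
  | [] => ρ.base
  | η :: _ => src η

/-- The target of a run. -/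
def Run.target (ρ : Run src tgt) : NVec d :=
  ρ.steps.getLast?.elim ρ.base tgt

/-- The ordering on runs: sources and targets are componentwise ordered, and there is
a strictly increasing (Higman) embedding of the step sequences with `η_i ≤ η'_{f(i)}`. -/
def RunLE (ρ ρ' : Run src tgt) : Prop :=
  ρ.source ≤ ρ'.source ∧ ρ.target ≤ ρ'.target ∧
    ∃ f : Fin ρ.steps.length → Fin ρ'.steps.length, StrictMono f ∧
      ∀ i, ρ.steps.get i ≤ ρ'.steps.get (f i)

/-- The transformer relation of a generalized transition `η`:
`P_η = {(src η' − src η, tgt η' − tgt η) : η ≤ η'}`. -/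
def transRel (src tgt : A → NVec d) (η : A) : Set (NVec d × NVec d) :=
  {p | ∃ η' : A, η ≤ η' ∧ src η' = src η + p.1 ∧ tgt η' = tgt η + p.2}

/-- The transformer relation of a configuration `c`:
`P_c = {(x,y) : some run goes from c+x to c+y}`. -/
def confRel (src tgt : A → NVec d) (c : NVec d) : Set (NVec d × NVec d) :=
  {p | ∃ ρ : Run src tgt, ρ.source = c + p.1 ∧ ρ.target = c + p.2}

/-- The transformer relation of a run `ρ`:
`P_ρ = {(src ρ' − src ρ, tgt ρ' − tgt ρ) : ρ ≤ ρ'}`. -/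
def runRel (ρ : Run src tgt) : Set (NVec d × NVec d) :=
  {p | ∃ ρ' : Run src tgt, RunLE ρ ρ' ∧
    ρ'.source = ρ.source + p.1 ∧ ρ'.target = ρ.target + p.2}

/-- The alternating composition
`P_{src η₁} ∘ P_{η₁} ∘ P_{src η₂} ∘ P_{η₂} ∘ … ∘ P_{η_r} ∘ P_t`
along a list of generalized transitions, ending with the configuration `t`. -/
def decompRel (src tgt : A → NVec d) (t : NVec d) : List A → Set (NVec d × NVec d)
  | [] => confRel src tgt t
  | η :: l => RelComp (confRel src tgt (src η))
      (RelComp (transRel src tgt η) (decompRel src tgt t l))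

def Pth (src tgt : A → NVec d) : NVec d → List A → NVec d → Prop
  | s, [], t => s = t
  | s, η :: l, t => src η = s ∧ Pth src tgt (tgt η) l t

theorem pth_append (src tgt : A → NVec d) (l₁ l₂ : List A) (s t : NVec d) :
    Pth src tgt s (l₁ ++ l₂) t ↔ ∃ m, Pth src tgt s l₁ m ∧ Pth src tgt m l₂ t := by
  induction l₁ generalizing s with
  | nil => simp [Pth]
  | cons a l ih => simp [Pth, ih, and_assoc]

theorem pth_of_chain (src tgt : A → NVec d) (a : A) (l : List A) (b : NVec d)
    (h : List.IsChain (fun η η' => tgt η = src η') (a :: l)) :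
    Pth src tgt (src a) (a :: l) ((a :: l).getLast?.elim b tgt) := by
  induction l generalizing a with
  | nil => simp [Pth]
  | cons c l ih =>
    rw [List.isChain_cons_cons] at h
    have := ih c h.2
    refine ⟨rfl, ?_⟩
    rw [h.1, List.getLast?_cons_cons]
    exact this

theorem chain_of_pth (src tgt : A → NVec d) (l : List A) (s t b : NVec d)
    (h : Pth src tgt s l t) :
    List.IsChain (fun η η' => tgt η = src η') l ∧ l.getLast?.elim s tgt = t ∧
      (l ≠ [] → l.getLast?.elim b tgt = t) := by
  induction l generalizing s b with
  | nil => simpa [Pth] using h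
  | cons a l ih =>
    obtain ⟨h1, h2⟩ := h
    cases l with
    | nil => simpa [Pth] using h2
    | cons c l =>
      have h3 := ih _ b h2
      have h4 := ih _ s h2
      refine ⟨List.isChain_cons_cons.2 ⟨h2.1.symm, h3.1⟩, ?_, fun _ => ?_⟩
      · rw [List.getLast?_cons_cons]; exact h4.2.2 (by simp)
      · rw [List.getLast?_cons_cons]; exact h3.2.2 (by simp)

theorem Run.pth {src tgt : A → NVec d} (ρ : Run src tgt) :
    Pth src tgt ρ.source ρ.steps ρ.target := by
  obtain ⟨l, b, h⟩ := ρ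
  cases l with
  | nil => simp [Pth, Run.source, Run.target]
  | cons a l => exact pth_of_chain src tgt a l b h

theorem exists_run {src tgt : A → NVec d} {s t : NVec d} {l : List A}
    (h : Pth src tgt s l t) :
    ∃ ρ : Run src tgt, ρ.steps = l ∧ ρ.source = s ∧ ρ.target = t := by
  have h' := chain_of_pth src tgt l s t s h
  refine ⟨⟨l, s, h'.1⟩, rfl, ?_, h'.2.1⟩
  cases l with
  | nil => rfl
  | cons a l => exact h.1

theorem mem_confRel (src tgt : A → NVec d) (c x y : NVec d) :
    (x, y) ∈ confRel src tgt c ↔ ∃ l, Pth src tgt (c + x) l (c + y) := by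
  constructor
  · rintro ⟨ρ, h1, h2⟩
    exact ⟨ρ.steps, by have := ρ.pth; rwa [h1, h2] at this⟩
  · rintro ⟨l, h⟩
    obtain ⟨ρ, -, h1, h2⟩ := exists_run h
    exact ⟨ρ, h1, h2⟩

theorem sublistForall_cons (a : A) (l l' : List A) :
    List.SublistForall₂ (· ≤ ·) (a :: l) l' ↔
      ∃ l₁ b l₂, l' = l₁ ++ b :: l₂ ∧ a ≤ b ∧ List.SublistForall₂ (· ≤ ·) l l₂ := by
  constructor
  · intro h
    induction l' with
    | nil => cases h
    | cons c l' ih =>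
      cases h with
      | cons h1 h2 => exact ⟨[], c, l', rfl, h1, h2⟩
      | cons_right h =>
        obtain ⟨l₁, b, l₂, rfl, h1, h2⟩ := ih h
        exact ⟨c :: l₁, b, l₂, rfl, h1, h2⟩
  · rintro ⟨l₁, b, l₂, rfl, h1, h2⟩
    induction l₁ with
    | nil => exact .cons h1 h2
    | cons c l₁ ih => exact .cons_right ih

theorem sublistForall_iff (l l' : List A) :
    (∃ f : Fin l.length → Fin l'.length, StrictMono f ∧ ∀ i, l.get i ≤ l'.get (f i)) ↔
      List.SublistForall₂ (· ≤ ·) l l' := by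
  rw [List.sublistForall₂_iff]
  constructor
  · rintro ⟨f, hf, h⟩
    refine ⟨List.ofFn fun i => l'.get (f i), ?_, ?_⟩
    · rw [List.forall₂_iff_get]
      refine ⟨by simp, fun i h1 h2 => ?_⟩
      simpa using h ⟨i, h1⟩
    · rw [List.sublist_iff_exists_fin_orderEmbedding_get_eq]
      have e : (List.ofFn fun i => l'.get (f i)).length = l.length := by simp
      refine ⟨OrderEmbedding.ofStrictMono (fun i => f (Fin.cast e i)) ?_, ?_⟩
      · intro i j hij
        exact hf (by simpa using hij)
      · intro i
        simp [Fin.cast]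
  · rintro ⟨m, h1, h2⟩
    rw [List.sublist_iff_exists_fin_orderEmbedding_get_eq] at h2
    obtain ⟨f, hf⟩ := h2
    rw [List.forall₂_iff_get] at h1
    refine ⟨fun i => f (Fin.cast h1.1 i), ?_, ?_⟩
    · intro i j hij
      exact f.strictMono (by simpa using hij)
    · intro i
      rw [← hf]
      exact h1.2 i i.2 (h1.1 ▸ i.2)

theorem mem_decompRel (src tgt : A → NVec d)
    (hmono : ∀ η η' : A, η ≤ η' → src η ≤ src η' ∧ tgt η ≤ tgt η')
    (l : List A) (c t x y : NVec d) (hp : Pth src tgt c l t) :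
    (x, y) ∈ decompRel src tgt t l ↔
      ∃ l', Pth src tgt (c + x) l' (t + y) ∧ List.SublistForall₂ (· ≤ ·) l l' := by
  induction l generalizing c x with
  | nil =>
    cases hp
    rw [decompRel, mem_confRel]
    exact ⟨fun ⟨l, h⟩ => ⟨l, h, .nil⟩, fun ⟨l, h, _⟩ => ⟨l, h⟩⟩
  | cons a l ih =>
    obtain ⟨rfl, hp⟩ := hp
    constructor
    · rintro ⟨z, h1, w, ⟨b, hb, hb1, hb2⟩, h3⟩
      obtain ⟨l₁, h1⟩ := (mem_confRel _ _ _ _ _).1 h1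
      obtain ⟨l₂, h2, h4⟩ := (ih _ _ hp).1 h3
      refine ⟨l₁ ++ b :: l₂, (pth_append _ _ _ _ _ _).2 ⟨_, h1, hb1, ?_⟩,
        (sublistForall_cons _ _ _).2 ⟨l₁, b, l₂, rfl, hb, h4⟩⟩
      rw [hb2]; exact h2
    · rintro ⟨l', h1, h2⟩
      obtain ⟨l₁, b, l₂, rfl, hb, h4⟩ := (sublistForall_cons _ _ _).1 h2
      obtain ⟨m, h5, rfl, h6⟩ := (pth_append _ _ _ _ _ _).1 h1
      obtain ⟨z, hz⟩ := exists_add_of_le (hmono _ _ hb).1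
      obtain ⟨w, hw⟩ := exists_add_of_le (hmono _ _ hb).2
      rw [hz] at h5
      rw [hw] at h6
      exact ⟨z, (mem_confRel _ _ _ _ _).2 ⟨l₁, h5⟩, w, ⟨b, hb, hz, hw⟩,
        (ih _ _ hp).2 ⟨l₂, h6, h4⟩⟩

/-- Assume the endpoint maps are monotone with respect to the order
on generalized transitions. For every nonempty run `ρ = η₁ … η_r`, the transformer
relation of `ρ` decomposes as
`P_ρ = P_{src η₁} ∘ P_{η₁} ∘ P_{src η₂} ∘ P_{η₂} ∘ … ∘ P_{η_r} ∘ P_{tgt η_r}`. -/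
theorem runRel_decomposition (src tgt : A → NVec d)
    (hmono : ∀ η η' : A, η ≤ η' → src η ≤ src η' ∧ tgt η ≤ tgt η')
    (ρ : Run src tgt) (hne : ρ.steps ≠ []) :
    runRel ρ = decompRel src tgt ρ.target ρ.steps := by
  ext ⟨x, y⟩
  rw [mem_decompRel src tgt hmono _ _ _ _ _ ρ.pth]
  constructor
  · rintro ⟨ρ', ⟨-, -, h⟩, h1, h2⟩
    refine ⟨ρ'.steps, ?_, (sublistForall_iff _ _).1 h⟩
    have := ρ'.pth
    rwa [h1, h2] at this
  · rintro ⟨l', h1, h2⟩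
    obtain ⟨ρ', rfl, h3, h4⟩ := exists_run h1
    refine ⟨ρ', ⟨?_, ?_, (sublistForall_iff _ _).2 h2⟩, h3, h4⟩
    · rw [h3]; exact le_self_add
    · rw [h4]; exact le_self_add

end Runs
end
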